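/- Let n ≥ 3 and r ≥ 3 be integers. There exists a constant c > 0 such that for every odd prime power q, Σ_{S ∈ M_n(𝔽_q), S ≠ 0} q^{r(n² + ρ_S)/2} ≤ c·q^{rn² − (n−1)(r−2)}, where ρ_S is the radical invariant of S. (Consequently the sums Σ_{S ≠ 0} ψ(−ST)·G(S,0)^r and Σ_{S ≠ 0} ψ(−ST)·Π_{i=1}^r G(S,−M_i) over M_n(𝔽_q) are O(q^{rn² − (n−1)(r−2)}).) -/

import Mathlib

open scoped BigOperators

/-- The additive character `ψ(X) = exp((2πi/p)·Tr_{F/F_p}(Tr X))` on `n × n` matrices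
over a finite field `F` of characteristic `p`. -/
noncomputable def psi (F : Type) [Field F] [Fintype F] {n : ℕ}
    (X : Matrix (Fin n) (Fin n) F) : ℂ :=
  letI : Algebra (ZMod (ringChar F)) F := ZMod.algebra _ _
  Complex.exp (2 * Real.pi * Complex.I *
    (((Algebra.trace (ZMod (ringChar F)) F X.trace).val : ℂ) / (ringChar F : ℂ)))

/-- The radical `{X : Tr(A(XY+YX)) = 0 for all Y}` of the quadratic form
`X ↦ Tr(AX²)` on `M_n(F)`. -/
def radical (F : Type) [Field F] [Fintype F] {n : ℕ}
    (A : Matrix (Fin n) (Fin n) F) : Submodule F (Matrix (Fin n) (Fin n) F) where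
  carrier := {X : Matrix (Fin n) (Fin n) F |
    ∀ Y : Matrix (Fin n) (Fin n) F, (A * (X * Y + Y * X)).trace = 0}
  zero_mem' := by intro Y; simp
  add_mem' := by
    intro X₁ X₂ h₁ h₂ Y
    have e : A * ((X₁ + X₂) * Y + Y * (X₁ + X₂))
        = A * (X₁ * Y + Y * X₁) + A * (X₂ * Y + Y * X₂) := by noncomm_ring
    show (A * ((X₁ + X₂) * Y + Y * (X₁ + X₂))).trace = 0
    rw [e, Matrix.trace_add, h₁ Y, h₂ Y, add_zero]
  smul_mem' := by
    intro c X h Y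
    have e : A * ((c • X) * Y + Y * (c • X)) = c • (A * (X * Y + Y * X)) := by
      rw [smul_mul_assoc, Matrix.mul_smul, ← smul_add, Matrix.mul_smul]
    show (A * ((c • X) * Y + Y * (c • X))).trace = 0
    rw [e, Matrix.trace_smul, h Y, smul_zero]

/-- The radical invariant `ρ_A`: the `F`-dimension of the radical of `X ↦ Tr(AX²)`. -/
noncomputable def rho (F : Type) [Field F] [Fintype F] {n : ℕ}
    (A : Matrix (Fin n) (Fin n) F) : ℕ :=
  Module.finrank F (radical F A)

/-- The quadratic matrix Gauss sum `G(A,B) = Σ_X ψ(AX² + BX)`. -/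
noncomputable def matGaussSum (F : Type) [Field F] [Fintype F] {n : ℕ}
    (A B : Matrix (Fin n) (Fin n) F) : ℂ :=
  ∑ X : Matrix (Fin n) (Fin n) F, psi F (A * X ^ 2 + B * X)

/-- The matrix sphere `σ_T = {X ∈ M_n(F)^r : X₁² + ⋯ + X_r² = T}`. -/
def matSphere (F : Type) [Field F] [Fintype F] [DecidableEq F] {n : ℕ} (r : ℕ)
    (T : Matrix (Fin n) (Fin n) F) : Finset (Fin r → Matrix (Fin n) (Fin n) F) :=
  Finset.univ.filter (fun X => ∑ i, (X i) ^ 2 = T)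

/-- The Fourier transform `f̂(M) = q^{-rn²} Σ_A f(A) conj(ψ(M·A))` on `M_n(F)^r`. -/
noncomputable def matFourier (F : Type) [Field F] [Fintype F] {n r : ℕ}
    (f : (Fin r → Matrix (Fin n) (Fin n) F) → ℂ)
    (M : Fin r → Matrix (Fin n) (Fin n) F) : ℂ :=
  ((Fintype.card F : ℂ) ^ (r * n ^ 2))⁻¹ *
    ∑ A : Fin r → Matrix (Fin n) (Fin n) F, f A * (starRingEnd ℂ) (psi F (∑ i, M i * A i))


/-- Anticommutant of an endomorphism. -/
def acE {K V : Type*} [Field K] [AddCommGroup V] [Module K V] (U : V →ₗ[K] V) :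
    Submodule K (V →ₗ[K] V) where
  carrier := {X | ∀ v, U (X v) + X (U v) = 0}
  zero_mem' := by intro v; simp
  add_mem' := by
    intro X Y hX hY v
    have h1 := hX v
    have h2 := hY v
    simp only [LinearMap.add_apply, map_add]
    rw [add_add_add_comm, h1, h2, add_zero]
  smul_mem' := by
    intro c X hX v
    have h1 := hX v
    simp only [LinearMap.smul_apply, map_smul]
    rw [← smul_add, h1, smul_zero]

theorem mem_acE {K V : Type*} [Field K] [AddCommGroup V] [Module K V] {U X : V →ₗ[K] V} :
    X ∈ acE U ↔ ∀ v, U (X v) + X (U v) = 0 := Iff.rfl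

theorem finrank_le_add_ker {K A B : Type*} [Field K] [AddCommGroup A] [Module K A]
    [AddCommGroup B] [Module K B] [FiniteDimensional K A] [FiniteDimensional K B]
    (N : Submodule K A) (N' : Submodule K B) (f : A →ₗ[K] B) (hf : ∀ x ∈ N, f x ∈ N') :
    Module.finrank K N ≤ Module.finrank K N' +
      Module.finrank K (N ⊓ LinearMap.ker f : Submodule K A) := by
  have h := LinearMap.finrank_range_add_finrank_ker (f.restrict hf)
  rw [← h]
  refine add_le_add (Submodule.finrank_le _) ?_
  let j : LinearMap.ker (f.restrict hf) →ₗ[K] (N ⊓ LinearMap.ker f : Submodule K A) :=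
    LinearMap.codRestrict _ (N.subtype ∘ₗ (LinearMap.ker (f.restrict hf)).subtype) (by
      intro x
      refine ⟨x.1.2, ?_⟩
      have := x.2
      rw [LinearMap.mem_ker] at this
      have h2 := congrArg Subtype.val this
      exact h2)
  refine LinearMap.finrank_le_finrank_of_injective (f := j) ?_
  intro x y hxy
  have := congrArg Subtype.val hxy
  exact Subtype.ext (Subtype.ext this)

theorem finrank_hom_le {K V V' : Type*} [Field K] [AddCommGroup V] [Module K V]
    [AddCommGroup V'] [Module K V'] [FiniteDimensional K V] [FiniteDimensional K V']
    (N : Submodule K (V →ₗ[K] V')) (W : Submodule K V) (Z : Submodule K V')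
    (h1 : ∀ X ∈ N, ∀ w ∈ W, X w = 0) (h2 : ∀ X ∈ N, ∀ v, X v ∈ Z) :
    Module.finrank K N ≤ (Module.finrank K V - Module.finrank K W) * Module.finrank K Z := by
  have e : Module.finrank K ((V ⧸ W) →ₗ[K] Z) =
      (Module.finrank K V - Module.finrank K W) * Module.finrank K Z := by
    rw [Module.finrank_linearMap, Submodule.finrank_quotient]
  rw [← e]
  let j : N →ₗ[K] ((V ⧸ W) →ₗ[K] Z) :=
    { toFun := fun X => W.liftQ (LinearMap.codRestrict Z X.1 (h2 X.1 X.2)) (by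
        intro w hw
        rw [LinearMap.mem_ker]
        exact Subtype.ext (h1 X.1 X.2 w hw))
      map_add' := by
        intro X Y
        ext v
        simp
      map_smul' := by
        intro c X
        ext v
        simp }
  refine LinearMap.finrank_le_finrank_of_injective (f := j) ?_
  intro X Y hXY
  ext v
  have := congrArg Subtype.val (LinearMap.congr_fun hXY (Submodule.Quotient.mk v))
  simpa [j] using this

theorem finrank_acE_comp_le {K V W : Type*} [Field K] [AddCommGroup V] [Module K V]
    [AddCommGroup W] [Module K W] [FiniteDimensional K V] [FiniteDimensional K W]
    (P : W →ₗ[K] V) (Q : V →ₗ[K] W) (hP : Function.Injective P) (hQ : Function.Surjective Q) :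
    Module.finrank K (acE (P ∘ₗ Q)) ≤
      (Module.finrank K V - Module.finrank K W) ^ 2 + Module.finrank K (acE (Q ∘ₗ P)) := by
  obtain ⟨l, hl⟩ := LinearMap.exists_leftInverse_of_injective P (LinearMap.ker_eq_bot.2 hP)
  have hl' : ∀ w, l (P w) = w := fun w => LinearMap.congr_fun hl w
  have key : ∀ X ∈ acE (P ∘ₗ Q), ∀ w, P (l (X (P w))) = X (P w) := by
    intro X hX w
    obtain ⟨v, rfl⟩ := hQ w
    have h := mem_acE.1 hX v
    simp only [LinearMap.comp_apply] at h
    have h' : X (P (Q v)) = P (- Q (X v)) := by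
      rw [map_neg]; exact eq_neg_of_add_eq_zero_right h
    rw [h', hl']
  let f : (V →ₗ[K] V) →ₗ[K] (W →ₗ[K] W) :=
    { toFun := fun X => l ∘ₗ X ∘ₗ P
      map_add' := by intro X Y; ext; simp
      map_smul' := by intro c X; ext; simp }
  have hf : ∀ X ∈ acE (P ∘ₗ Q), f X ∈ acE (Q ∘ₗ P) := by
    intro X hX w
    have h := mem_acE.1 hX (P w)
    simp only [LinearMap.comp_apply] at h
    simp only [f, LinearMap.coe_mk, AddHom.coe_mk, LinearMap.comp_apply]
    apply hP
    rw [map_add, key X hX, key X hX, map_zero]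
    exact h
  have h := finrank_le_add_ker _ _ f hf
  have h2 : Module.finrank K (acE (P ∘ₗ Q) ⊓ LinearMap.ker f : Submodule K (V →ₗ[K] V)) ≤
      (Module.finrank K V - Module.finrank K W) ^ 2 := by
    have := finrank_hom_le (acE (P ∘ₗ Q) ⊓ LinearMap.ker f) (LinearMap.range P)
      (LinearMap.ker Q) ?_ ?_
    · rw [LinearMap.finrank_range_of_inj hP] at this
      have hk : Module.finrank K (LinearMap.ker Q) = Module.finrank K V - Module.finrank K W := by
        have := LinearMap.finrank_range_add_finrank_ker Q
        rw [LinearMap.range_eq_top.2 hQ, finrank_top] at this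
        omega
      rw [hk, ← pow_two] at this
      exact this
    · rintro X ⟨hX, hXf⟩ _ ⟨w, rfl⟩
      rw [← key X hX]
      have := LinearMap.congr_fun hXf w
      simp only [f, LinearMap.coe_mk, AddHom.coe_mk, LinearMap.comp_apply] at this
      rw [this]; simp
    · rintro X ⟨hX, hXf⟩ v
      have h := mem_acE.1 hX v
      have h3 : X (P (Q v)) = 0 := by
        rw [← key X hX]
        have := LinearMap.congr_fun hXf (Q v)
        simp only [f, LinearMap.coe_mk, AddHom.coe_mk, LinearMap.comp_apply] at this
        rw [this]; simp
      simp only [LinearMap.comp_apply] at h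
      rw [h3, add_zero] at h
      rw [LinearMap.mem_ker]
      apply hP
      rw [h, map_zero]
  omega

/-- Peeling lemma: over an algebraically closed field. -/
theorem finrank_acE_peel {K : Type*} [Field K] [IsAlgClosed K] (h2 : (2 : K) ≠ 0)
    (M : ℕ) (Φ : ℕ → ℕ)
    (hΦ : ∀ a b k, 1 ≤ a + b → a + b ≤ M → 2 * (a * b) + Φ k ≤ Φ (k + (a + b)))
    (hmono : Monotone Φ)
    (n : ℕ) : ∀ {V : Type*} [AddCommGroup V] [Module K V] [FiniteDimensional K V]
    (U : V →ₗ[K] V), Function.Injective U → Module.finrank K V = n →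
    (∀ a : K, Module.finrank K (LinearMap.ker (U ∘ₗ U - a • LinearMap.id)) ≤ M) →
    Module.finrank K (acE U) ≤ Φ n := by
  induction n using Nat.strong_induction_on with
  | _ n ih =>
  intro V _ _ _ U hU hn hM
  rcases Nat.eq_zero_or_pos n with h0 | hpos
  · subst h0
    have : Module.finrank K (V →ₗ[K] V) = 0 := by
      rw [Module.finrank_linearMap, hn]
    have := Submodule.finrank_le (acE U)
    omega
  have : Nontrivial V := Module.nontrivial_of_finrank_pos (R := K) (by omega)
  obtain ⟨lam, hlam⟩ := Module.End.exists_eigenvalue (K := K) (V := V) U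
  obtain ⟨v0, hv0⟩ := hlam.exists_hasEigenvector
  have hv0' : U v0 = lam • v0 := hv0.apply_eq_smul
  have hlam0 : lam ≠ 0 := by
    rintro rfl
    rw [zero_smul] at hv0'
    exact hv0.2 (hU (by rw [hv0', map_zero]))
  set T : V →ₗ[K] V := U ∘ₗ U - (lam * lam) • LinearMap.id with hT
  have hTv : ∀ v, T v = U (U v) - (lam * lam) • v := fun v => by simp [hT]
  set A : V →ₗ[K] V := U - lam • LinearMap.id with hA
  set B : V →ₗ[K] V := U + lam • LinearMap.id with hB
  have hAv : ∀ v, A v = U v - lam • v := fun v => by simp [hA]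
  have hBv : ∀ v, B v = U v + lam • v := fun v => by simp [hB]
  have hAB : ∀ v, A (B v) = T v := by
    intro v
    rw [hAv, hBv, hTv, map_add, map_smul, smul_add, smul_smul]; abel
  have hBA : ∀ v, B (A v) = T v := by
    intro v
    rw [hBv, hAv, hTv, map_sub, map_smul, smul_sub, smul_smul]; abel
  have hTU : ∀ v, T (U v) = U (T v) := by
    intro v; rw [hTv, hTv, map_sub, map_smul]
  set a := Module.finrank K (LinearMap.ker A) with ha
  set b := Module.finrank K (LinearMap.ker B) with hb
  set g := Module.finrank K (LinearMap.ker T) with hg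
  have hab : a + b ≤ g := by
    have hd : LinearMap.ker A ⊓ LinearMap.ker B = ⊥ := by
      rw [Submodule.eq_bot_iff]
      rintro v ⟨hv1, hv2⟩
      have e1 : A v = 0 := hv1
      have e2 : B v = 0 := hv2
      rw [hAv] at e1
      rw [hBv] at e2
      have e3 : (2 * lam) • v = 0 := by
        rw [two_mul, add_smul]
        have : lam • v + lam • v = (U v + lam • v) - (U v - lam • v) := by abel
        rw [this, e1, e2, sub_zero]
      exact (smul_eq_zero.1 e3).resolve_left (mul_ne_zero h2 hlam0)
    have := Submodule.finrank_sup_add_finrank_inf_eq (LinearMap.ker A) (LinearMap.ker B)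
    rw [hd, finrank_bot, add_zero] at this
    rw [ha, hb, ← this, hg]
    apply Submodule.finrank_mono
    rw [sup_le_iff]
    constructor
    · intro v hv
      have e1 : A v = 0 := hv
      rw [LinearMap.mem_ker, ← hBA, e1, map_zero]
    · intro v hv
      have e1 : B v = 0 := hv
      rw [LinearMap.mem_ker, ← hAB, e1, map_zero]
  have ha1 : 1 ≤ a := by
    rw [ha]
    apply Nat.one_le_iff_ne_zero.2
    intro h
    have hbot : LinearMap.ker A = ⊥ := Submodule.finrank_eq_zero.1 h
    have : v0 ∈ LinearMap.ker A := by rw [LinearMap.mem_ker, hAv, hv0', sub_self]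
    rw [hbot, Submodule.mem_bot] at this
    exact hv0.2 this
  set W := LinearMap.range T with hW
  have hWg : Module.finrank K W + g = n := by
    rw [← hn]; exact LinearMap.finrank_range_add_finrank_ker T
  have hUW : ∀ w ∈ W, U w ∈ W := by
    rintro _ ⟨v, rfl⟩
    exact ⟨U v, hTU v⟩
  set U' := U.restrict hUW with hU'
  have hXT : ∀ X ∈ acE U, ∀ v, X (T v) = T (X v) := by
    intro X hX v
    have e1 := mem_acE.1 hX (U v)
    have e2 := mem_acE.1 hX v
    rw [hTv, hTv, map_sub, map_smul]
    congr 1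
    have e3 : X (U (U v)) = - U (X (U v)) := eq_neg_of_add_eq_zero_right e1
    have e4 : X (U v) = - U (X v) := eq_neg_of_add_eq_zero_right e2
    rw [e3, e4, map_neg, neg_neg]
  have hXW : ∀ X ∈ acE U, ∀ w ∈ W, X w ∈ W := by
    rintro X hX _ ⟨v, rfl⟩
    exact ⟨X v, (hXT X hX v).symm⟩
  have hIH : Module.finrank K (acE U') ≤ Φ (Module.finrank K W) := by
    refine ih _ (by omega) U' ?_ rfl ?_
    · intro x y hxy
      exact Subtype.ext (hU (congrArg Subtype.val hxy))
    · intro c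
      refine le_trans ?_ (hM c)
      let j : LinearMap.ker (U' ∘ₗ U' - c • LinearMap.id) →ₗ[K]
          LinearMap.ker (U ∘ₗ U - c • LinearMap.id) :=
        LinearMap.codRestrict _ (W.subtype ∘ₗ (LinearMap.ker _).subtype) (by
          intro x
          have hx : (U' ∘ₗ U' - c • LinearMap.id : W →ₗ[K] W) x.1 = 0 := x.2
          have h3 := congrArg Subtype.val hx
          rw [LinearMap.mem_ker]
          exact h3)
      refine LinearMap.finrank_le_finrank_of_injective (f := j) ?_
      intro x y hxy
      have h3 := congrArg Subtype.val hxy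
      exact Subtype.ext (Subtype.ext h3)
  obtain ⟨l, hl⟩ := LinearMap.exists_leftInverse_of_injective W.subtype
    (LinearMap.ker_eq_bot.2 W.subtype_injective)
  have hl' : ∀ w : W, l w = w := fun w => LinearMap.congr_fun hl w
  let f : (V →ₗ[K] V) →ₗ[K] (W →ₗ[K] W) :=
    { toFun := fun X => l ∘ₗ X ∘ₗ W.subtype
      map_add' := by intro X Y; ext; simp
      map_smul' := by intro c X; ext; simp }
  have hfv : ∀ X ∈ acE U, ∀ w : W, ((f X w : W) : V) = X w := by
    intro X hX w
    have := hl' ⟨X w, hXW X hX w w.2⟩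
    exact congrArg Subtype.val this
  have hf : ∀ X ∈ acE U, f X ∈ acE U' := by
    intro X hX w
    apply Subtype.ext
    have e := mem_acE.1 hX w
    have e1 : ((U' (f X w) : W) : V) = U (X w) := by
      rw [hU', LinearMap.coe_restrict_apply, hfv X hX]
    have e2 : ((f X (U' w) : W) : V) = X (U w) := by
      rw [hfv X hX, hU', LinearMap.coe_restrict_apply]
    rw [Submodule.coe_add, e1, e2, e, Submodule.coe_zero]
  have h1 := finrank_le_add_ker _ _ f hf
  set N : Submodule K (V →ₗ[K] V) := acE U ⊓ LinearMap.ker f with hN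
  have hN0 : ∀ X ∈ N, ∀ v, X (T v) = 0 := by
    rintro X ⟨hX, hXf⟩ v
    have := hfv X hX ⟨T v, ⟨v, rfl⟩⟩
    rw [LinearMap.mem_ker.1 hXf] at this
    simpa using this.symm
  have hcA : ∀ X ∈ acE U, ∀ v, X (A v) = - B (X v) := by
    intro X hX v
    have e2 := mem_acE.1 hX v
    have e4 : X (U v) = - U (X v) := eq_neg_of_add_eq_zero_right e2
    rw [hAv, hBv, map_sub, map_smul, e4]; abel
  have hcB : ∀ X ∈ acE U, ∀ v, X (B v) = - A (X v) := by
    intro X hX v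
    have e2 := mem_acE.1 hX v
    have e4 : X (U v) = - U (X v) := eq_neg_of_add_eq_zero_right e2
    rw [hAv, hBv, map_add, map_smul, e4]; abel
  have hrA : Module.finrank K V - Module.finrank K (LinearMap.range A) = a := by
    have := LinearMap.finrank_range_add_finrank_ker A
    omega
  have hrB : Module.finrank K V - Module.finrank K (LinearMap.range B) = b := by
    have := LinearMap.finrank_range_add_finrank_ker B
    omega
  let fB : (V →ₗ[K] V) →ₗ[K] (V →ₗ[K] V) :=
    { toFun := fun X => X ∘ₗ B
      map_add' := by intro X Y; ext; simp
      map_smul' := by intro c X; ext; simp }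
  have h3 := finrank_le_add_ker N (N.map fB) fB (fun x hx => Submodule.mem_map_of_mem hx)
  have h4 : Module.finrank K (N.map fB) ≤ a * b := by
    rw [← hrA, hb]
    apply finrank_hom_le
    · rintro _ ⟨X, hX, rfl⟩ _ ⟨v, rfl⟩
      change X (B (A v)) = 0
      rw [hBA, hN0 X hX]
    · rintro _ ⟨X, hX, rfl⟩ v
      change X (B v) ∈ _
      have := hcA X hX.1 (B v)
      rw [hAB, hN0 X hX] at this
      rw [LinearMap.mem_ker]
      exact neg_eq_zero.1 this.symm
  have h5 : Module.finrank K (N ⊓ LinearMap.ker fB : Submodule K (V →ₗ[K] V)) ≤ b * a := by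
    rw [← hrB, ha]
    apply finrank_hom_le
    · rintro X ⟨hX, hXf⟩ _ ⟨v, rfl⟩
      exact LinearMap.congr_fun hXf v
    · rintro X ⟨hX, hXf⟩ v
      have e : X (B v) = 0 := LinearMap.congr_fun hXf v
      have := hcB X hX.1 v
      rw [e] at this
      rw [LinearMap.mem_ker]
      exact neg_eq_zero.1 this.symm
  have h6 := hΦ a b (Module.finrank K W) (by omega) (le_trans hab (hM _))
  have h7 : Φ (Module.finrank K W + (a + b)) ≤ Φ n := hmono (by omega)
  have h8 : b * a = a * b := mul_comm _ _
  omega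

theorem mem_radical_iff {F : Type} [Field F] [Fintype F] {n : ℕ}
    (A X : Matrix (Fin n) (Fin n) F) : X ∈ radical F A ↔ A * X + X * A = 0 := by
  have h : ∀ Y : Matrix (Fin n) (Fin n) F,
      (A * (X * Y + Y * X)).trace = ((A * X + X * A) * Y).trace := by
    intro Y
    rw [mul_add, add_mul, Matrix.trace_add, Matrix.trace_add]
    congr 1
    · rw [mul_assoc]
    · rw [← mul_assoc, Matrix.trace_mul_comm, mul_assoc]
  constructor
  · intro hX
    rw [Matrix.ext_iff_trace_mul_right]
    intro Y
    rw [← h Y, zero_mul, Matrix.trace_zero]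
    exact hX Y
  · intro hX Y
    rw [h Y, hX, zero_mul, Matrix.trace_zero]

theorem rho_eq_acE {F : Type} [Field F] [Fintype F] {n : ℕ}
    (A : Matrix (Fin n) (Fin n) F) :
    rho F A = Module.finrank F (acE (Matrix.toLin' A)) := by
  have h : (radical F A).map (Matrix.toLin' : Matrix (Fin n) (Fin n) F ≃ₗ[F] _).toLinearMap
      = acE (Matrix.toLin' A) := by
    ext X
    rw [Submodule.mem_map]
    have key : ∀ Y : Matrix (Fin n) (Fin n) F,
        Y ∈ radical F A ↔ Matrix.toLin' Y ∈ acE (Matrix.toLin' A) := by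
      intro Y
      rw [mem_radical_iff, mem_acE, ← Matrix.toLin'.map_eq_zero_iff, LinearMap.ext_iff]
      simp [Matrix.toLin'_mul]
    constructor
    · rintro ⟨Y, hY, rfl⟩
      exact (key Y).1 hY
    · intro hX
      refine ⟨LinearMap.toMatrix' X, ?_, ?_⟩
      · rw [key]; simpa using hX
      · simp
  rw [rho, ← h, LinearEquiv.finrank_map_eq]

theorem exists_factor {F : Type} [Field F] {n k : ℕ}
    (S : Matrix (Fin n) (Fin n) F) (hS : S.rank = k) :
    ∃ (J : Fin k ↪ Fin n) (P : Matrix (Fin n) (Fin k) F) (Q : Matrix (Fin k) (Fin n) F),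
      P.submatrix J id = 1 ∧ S = P * Q ∧ Function.Surjective (Matrix.toLin' Q) := by
  classical
  obtain ⟨κ, a, ha, hspan, hli⟩ := exists_linearIndependent' F S.row
  have : Finite κ := Finite.of_injective a ha
  have : Fintype κ := Fintype.ofFinite κ
  have hcard : Fintype.card κ = k := by
    rw [← hS, Matrix.rank_eq_finrank_span_row, ← hspan, finrank_span_eq_card hli]
  let e : Fin k ≃ κ := (Fintype.equivFinOfCardEq hcard).symm
  let J : Fin k ↪ Fin n := ⟨a ∘ e, ha.comp e.injective⟩
  have hli' : LinearIndependent F (S.row ∘ J) := hli.comp e e.injective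
  have hspan' : Submodule.span F (Set.range (S.row ∘ J)) = Submodule.span F (Set.range S.row) := by
    rw [← hspan]
    congr 1
    change Set.range ((S.row ∘ a) ∘ e) = _
    rw [Set.range_comp, e.range_eq_univ, Set.image_univ]
  have hc : ∀ i, ∃ c : Fin k → F, ∑ j, c j • (S.row ∘ J) j = S.row i := by
    intro i
    rw [← Submodule.mem_span_range_iff_exists_fun, hspan']
    exact Submodule.subset_span ⟨i, rfl⟩
  choose P hP using hc
  have hmul : S = Matrix.of P * S.submatrix J id := by
    ext i j
    have := congrFun (hP i) j
    rw [Matrix.mul_apply]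
    simp only [Finset.sum_apply, Pi.smul_apply, smul_eq_mul, Function.comp_apply,
      Matrix.row_apply] at this
    simpa using this.symm
  refine ⟨J, Matrix.of P, S.submatrix J id, ?_, hmul, ?_⟩
  · ext i j
    have h1 := hP (J i)
    have h2 : ∑ j, (1 : Matrix (Fin k) (Fin k) F) i j • (S.row ∘ J) j = S.row (J i) := by
      simp [Matrix.one_apply]
    have h3 := Fintype.linearIndependent_iff.1 hli' (fun j => P (J i) j - (1 : Matrix _ _ F) i j)
      (by simp only [sub_smul, Finset.sum_sub_distrib]; rw [h1, h2, sub_self]) j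
    simpa using sub_eq_zero.1 h3
  · rw [← LinearMap.range_eq_top]
    apply Submodule.eq_top_of_finrank_eq
    have h1 : k ≤ (S.submatrix J id).rank := by
      have := Matrix.rank_mul_le_right (Matrix.of P) (S.submatrix J id)
      rw [← hmul, hS] at this
      exact this
    have h2 := Matrix.rank_le_height (S.submatrix J id)
    have h3 : (S.submatrix J id).rank = k := le_antisymm h2 h1
    rw [Matrix.toLin'_apply']
    change (S.submatrix J id).rank = _
    rw [h3]; simp

theorem card_compl_range {n k : ℕ} (J : Fin k ↪ Fin n) [Fintype {i // i ∉ Set.range J}] :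
    Fintype.card {i // i ∉ Set.range J} = n - k := by
  classical
  rw [Fintype.card_subtype_compl, Fintype.card_fin]
  congr 1
  exact (Fintype.card_congr (Equiv.ofInjective J J.injective)).symm.trans (Fintype.card_fin k)

theorem injective_of_chart {F : Type} [Field F] {n k : ℕ} {J : Fin k ↪ Fin n}
    {P : Matrix (Fin n) (Fin k) F} (hP : P.submatrix J id = 1) :
    Function.Injective (Matrix.toLin' P) := by
  intro v w h
  have h1 : ∀ v : Fin k → F, (P.mulVec v) ∘ J = v := by
    intro v
    have : (P.submatrix J id).mulVec v = v := by rw [hP, Matrix.one_mulVec]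
    exact this
  rw [Matrix.toLin'_apply, Matrix.toLin'_apply] at h
  rw [← h1 v, ← h1 w, h]

/-- Sum over a covered set. -/
theorem sum_le_of_cover {α β : Type*} (A : Finset α) (T : Finset β)
    (w : α → ℝ) (f : β → ℝ) (hf : ∀ t ∈ T, 0 ≤ f t) (π : β → α)
    (h : ∀ x ∈ A, ∃ t ∈ T, π t = x ∧ w x ≤ f t) :
    ∑ x ∈ A, w x ≤ ∑ t ∈ T, f t := by
  classical
  rcases A.eq_empty_or_nonempty with rfl | ⟨x0, hx0⟩
  · rw [Finset.sum_empty]; exact Finset.sum_nonneg hf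
  have : Nonempty β := (h x0 hx0).nonempty
  choose! c hcT hcπ hcw using h
  have hinj : Set.InjOn c (↑A : Set α) := by
    intro x hx y hy hxy
    rw [← hcπ x hx, ← hcπ y hy, hxy]
  calc ∑ x ∈ A, w x ≤ ∑ x ∈ A, f (c x) := Finset.sum_le_sum hcw
    _ = ∑ t ∈ A.image c, f t := (Finset.sum_image hinj).symm
    _ ≤ ∑ t ∈ T, f t := by
      apply Finset.sum_le_sum_of_subset_of_nonneg
      · intro t ht
        obtain ⟨x, hx, rfl⟩ := Finset.mem_image.1 ht
        exact hcT x hx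
      · intro t ht _
        exact hf t ht

open Classical in
/-- Matrices in the chart `J`. -/
noncomputable def chart (F : Type) [Field F] [Fintype F] {n k : ℕ} (J : Fin k ↪ Fin n) :
    Finset (Matrix (Fin n) (Fin k) F) :=
  Finset.univ.filter (fun P => P.submatrix J id = 1)

theorem mem_chart {F : Type} [Field F] [Fintype F] {n k : ℕ} {J : Fin k ↪ Fin n}
    {P : Matrix (Fin n) (Fin k) F} : P ∈ chart F J ↔ P.submatrix J id = 1 := by
  simp [chart]

theorem card_chart_le (F : Type) [Field F] [Fintype F] {n k : ℕ} (J : Fin k ↪ Fin n) :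
    (chart F J).card ≤ Fintype.card F ^ (k * (n - k)) := by
  classical
  have h : (chart F J).card ≤
      (Finset.univ : Finset ({i // i ∉ Set.range J} → Fin k → F)).card := by
    apply Finset.card_le_card_of_injOn (fun P i => P i.1)
    · intro P _; simp
    · intro P hP P' hP' h
      have hP : P.submatrix J id = 1 := mem_chart.1 hP
      have hP' : P'.submatrix J id = 1 := mem_chart.1 hP'
      ext i j
      by_cases hi : i ∈ Set.range J
      · obtain ⟨i', rfl⟩ := hi
        have := congrFun (congrFun (hP.trans hP'.symm) i') j
        simpa using this
      · exact congrFun (congrFun h ⟨i, hi⟩) j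
  refine h.trans (le_of_eq ?_)
  rw [Finset.card_univ, Fintype.card_fun, Fintype.card_fun, card_compl_range, Fintype.card_fin,
    ← pow_mul]

theorem eq_of_mul_chart {F : Type} [Field F] {m n k : ℕ} {J : Fin k ↪ Fin n}
    {P : Matrix (Fin n) (Fin k) F} (hP : P.submatrix J id = 1) {Q Q' : Matrix (Fin m) (Fin n) F}
    (h : Q * P = Q' * P) (h' : ∀ i j, j ∉ Set.range J → Q i j = Q' i j) : Q = Q' := by
  classical
  ext i j
  by_cases hj : j ∈ Set.range J
  · obtain ⟨j', rfl⟩ := hj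
    have h1 := congrFun (congrFun h i) j'
    rw [← sub_eq_zero] at h1 ⊢
    rw [Matrix.mul_apply, Matrix.mul_apply, ← Finset.sum_sub_distrib,
      Finset.sum_eq_single (J j')] at h1
    · have : P (J j') j' = 1 := by
        have := congrFun (congrFun hP j') j'
        simpa using this
      rw [this] at h1
      simpa using h1
    · intro b _ hb
      by_cases hb' : b ∈ Set.range J
      · obtain ⟨b', rfl⟩ := hb'
        have : P (J b') j' = 0 := by
          have := congrFun (congrFun hP b') j'
          rw [Matrix.one_apply_ne (fun h => hb (by rw [h]))] at this
          simpa using this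
        rw [this]; simp
      · rw [h' i b hb', sub_self]
    · simp
  · exact h' i j hj

theorem sum_mul_chart_le {F : Type} [Field F] [Fintype F] {m n k : ℕ} {J : Fin k ↪ Fin n}
    {P : Matrix (Fin n) (Fin k) F} (hP : P.submatrix J id = 1)
    (f : Matrix (Fin m) (Fin k) F → ℝ) (hf : ∀ M, 0 ≤ f M) :
    ∑ Q : Matrix (Fin m) (Fin n) F, f (Q * P) ≤
      (Fintype.card F : ℝ) ^ (m * (n - k)) * ∑ M, f M := by
  classical
  let c : Matrix (Fin m) (Fin n) F →
      (Fin m → {i // i ∉ Set.range J} → F) × Matrix (Fin m) (Fin k) F :=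
    fun Q => (fun i j => Q i j.1, Q * P)
  have hinj : Function.Injective c := by
    intro Q Q' h
    have h1 := congrArg Prod.fst h
    have h2 := congrArg Prod.snd h
    exact eq_of_mul_chart hP h2 (fun i j hj => congrFun (congrFun h1 i) ⟨j, hj⟩)
  calc ∑ Q : Matrix (Fin m) (Fin n) F, f (Q * P) = ∑ Q : Matrix (Fin m) (Fin n) F, f (c Q).2 := rfl
    _ = ∑ t ∈ Finset.univ.image c, f t.2 := (Finset.sum_image (f := fun t => f t.2) (hinj.injOn)).symm
    _ ≤ ∑ t : (Fin m → {i // i ∉ Set.range J} → F) × Matrix (Fin m) (Fin k) F, f t.2 := Finset.sum_le_sum_of_subset_of_nonneg (Finset.subset_univ _)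
        (fun t _ _ => hf t.2)
    _ = _ := by
      rw [Fintype.sum_prod_type]
      simp only [Finset.sum_const, Finset.card_univ, nsmul_eq_mul]
      congr 1
      rw [Fintype.card_fun, Fintype.card_fun, card_compl_range, Fintype.card_fin, ← pow_mul]
      push_cast
      congr 1
      ring

theorem sum_rank_le (F : Type) [Field F] [Fintype F] (s : ℝ) (hs : 1 ≤ s)
    (hq : s ^ 2 = Fintype.card F) (n k : ℕ) :
    ∑ S ∈ Finset.univ.filter (fun S : Matrix (Fin n) (Fin n) F => S.rank = k),
        s ^ (3 * rho F S) ≤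
      (Fintype.card (Fin k ↪ Fin n) : ℝ) * s ^ (4 * (k * (n - k)) + 3 * (n - k) ^ 2) *
        ∑ U : Matrix (Fin k) (Fin k) F, s ^ (3 * rho F U) := by
  classical
  have hs0 : 0 ≤ s := by linarith
  let T : Finset (Σ _ : (Fin k ↪ Fin n), Σ _ : Matrix (Fin n) (Fin k) F,
      Matrix (Fin k) (Fin n) F) :=
    Finset.univ.sigma (fun J => (chart F J).sigma (fun _ => Finset.univ))
  let f : (Σ _ : (Fin k ↪ Fin n), Σ _ : Matrix (Fin n) (Fin k) F,
      Matrix (Fin k) (Fin n) F) → ℝ :=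
    fun t => s ^ (3 * (n - k) ^ 2) * s ^ (3 * rho F (t.2.2 * t.2.1))
  have h1 := sum_le_of_cover
    (Finset.univ.filter (fun S : Matrix (Fin n) (Fin n) F => S.rank = k)) T
    (fun S => s ^ (3 * rho F S)) f (fun t _ => by positivity) (fun t => t.2.1 * t.2.2) ?_
  · refine h1.trans ?_
    rw [Finset.sum_sigma]
    have h2 : ∀ J : (Fin k ↪ Fin n), ∑ x ∈ (chart F J).sigma (fun _ => Finset.univ), f ⟨J, x⟩ ≤
        s ^ (4 * (k * (n - k)) + 3 * (n - k) ^ 2) *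
        ∑ U : Matrix (Fin k) (Fin k) F, s ^ (3 * rho F U) := by
      intro J
      rw [Finset.sum_sigma]
      have h3 : ∀ P ∈ chart F J, ∑ Q, f ⟨J, ⟨P, Q⟩⟩ ≤ s ^ (2 * (k * (n - k)) + 3 * (n - k) ^ 2) *
        ∑ U : Matrix (Fin k) (Fin k) F, s ^ (3 * rho F U) := by
        intro P hP
        simp only [f]
        rw [← Finset.mul_sum]
        have := sum_mul_chart_le (m := k) (mem_chart.1 hP) (fun M => s ^ (3 * rho F M))
          (fun M => by positivity)
        rw [← hq, ← pow_mul] at this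
        calc _ ≤ s ^ (3 * (n - k) ^ 2) * _ := mul_le_mul_of_nonneg_left this (by positivity)
          _ = _ := by rw [← mul_assoc, ← pow_add]; congr 2; ring
      refine (Finset.sum_le_card_nsmul _ _ _ h3).trans ?_
      rw [nsmul_eq_mul]
      have h4 : ((chart F J).card : ℝ) ≤ s ^ (2 * (k * (n - k))) := by
        rw [pow_mul, hq]
        exact_mod_cast card_chart_le F J
      calc _ ≤ s ^ (2 * (k * (n - k))) * _ := mul_le_mul_of_nonneg_right h4 (by positivity)
        _ = _ := by rw [← mul_assoc, ← pow_add]; congr 2; ring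
    refine (Finset.sum_le_card_nsmul _ _ _ (fun J _ => h2 J)).trans ?_
    rw [nsmul_eq_mul, Finset.card_univ, mul_assoc]
  · intro S hS
    rw [Finset.mem_filter] at hS
    obtain ⟨J, P, Q, hP, hPQ, hQ⟩ := exists_factor S hS.2
    refine ⟨⟨J, P, Q⟩, ?_, hPQ.symm, ?_⟩
    · simp only [T, Finset.mem_sigma, Finset.mem_univ, true_and, and_true]
      exact mem_chart.2 hP
    · simp only [f]
      rw [← pow_add]
      apply pow_le_pow_right₀ hs
      have := finrank_acE_comp_le (Matrix.toLin' P) (Matrix.toLin' Q) (injective_of_chart hP) hQ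
      rw [← Matrix.toLin'_mul, ← Matrix.toLin'_mul, ← rho_eq_acE, ← rho_eq_acE, ← hPQ] at this
      simp only [Module.finrank_fin_fun] at this
      omega

theorem chart_cancel {F : Type} [Field F] {n k m : ℕ} {J : Fin k ↪ Fin n}
    {P : Matrix (Fin n) (Fin k) F} (hP : P.submatrix J id = 1)
    {X Y : Matrix (Fin k) (Fin m) F} (h : P * X = P * Y) : X = Y := by
  have h1 : ∀ Z : Matrix (Fin k) (Fin m) F, (P * Z).submatrix J id = Z := by
    intro Z
    have : (P * Z).submatrix J id = P.submatrix J id * Z := by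
      ext i j; simp [Matrix.mul_apply]
    rw [this, hP, Matrix.one_mul]
  rw [← h1 X, ← h1 Y, h]

theorem surj_cancel {F : Type} [Field F] {n k m : ℕ}
    {Q : Matrix (Fin k) (Fin n) F} (hQ : Function.Surjective (Matrix.toLin' Q))
    {X Y : Matrix (Fin m) (Fin k) F} (h : X * Q = Y * Q) : X = Y := by
  apply Matrix.toLin'.injective
  apply LinearMap.ext
  intro w
  obtain ⟨v, rfl⟩ := hQ w
  have := congrArg (fun Z => Matrix.toLin' Z v) h
  simpa [Matrix.toLin'_mul] using this

/-- Square case. -/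
theorem card_sqrt_square_rank (F : Type) [Field F] [Fintype F] [DecidableEq F] (s : ℝ) (hs : 1 ≤ s)
    (hq : s ^ 2 = Fintype.card F) (g k : ℕ) (b : F) :
    ((Finset.univ.filter (fun R : Matrix (Fin g) (Fin g) F => R * R = b • R ∧ R.rank = k)).card : ℝ)
      ≤ (Fintype.card (Fin k ↪ Fin g) : ℝ) * s ^ (4 * (k * (g - k))) := by
  classical
  have hs0 : 0 ≤ s := by linarith
  let T : Finset (Σ _ : (Fin k ↪ Fin g), Σ _ : Matrix (Fin g) (Fin k) F,
      Matrix (Fin k) (Fin g) F) :=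
    Finset.univ.sigma (fun J => (chart F J).sigma (fun _ => Finset.univ))
  let f : (Σ _ : (Fin k ↪ Fin g), Σ _ : Matrix (Fin g) (Fin k) F,
      Matrix (Fin k) (Fin g) F) → ℝ :=
    fun t => if t.2.2 * t.2.1 = b • (1 : Matrix (Fin k) (Fin k) F) then 1 else 0
  have h1 := sum_le_of_cover
    (Finset.univ.filter (fun R : Matrix (Fin g) (Fin g) F => R * R = b • R ∧ R.rank = k)) T
    (fun _ => 1) f (fun t _ => by simp only [f]; split_ifs <;> norm_num)
    (fun t => t.2.1 * t.2.2) ?_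
  · rw [Finset.sum_const, nsmul_eq_mul, mul_one] at h1
    refine h1.trans ?_
    rw [Finset.sum_sigma]
    have h2 : ∀ J : (Fin k ↪ Fin g), ∑ x ∈ (chart F J).sigma (fun _ => Finset.univ), f ⟨J, x⟩ ≤
        s ^ (4 * (k * (g - k))) := by
      intro J
      rw [Finset.sum_sigma]
      have h3 : ∀ P ∈ chart F J, ∑ Q, f ⟨J, ⟨P, Q⟩⟩ ≤ s ^ (2 * (k * (g - k))) := by
        intro P hP
        simp only [f]
        have := sum_mul_chart_le (m := k) (mem_chart.1 hP)
          (fun M => if M = b • (1 : Matrix (Fin k) (Fin k) F) then (1 : ℝ) else 0)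
          (fun M => by split_ifs <;> norm_num)
        rw [← hq, ← pow_mul] at this
        simpa using this
      refine (Finset.sum_le_card_nsmul _ _ _ h3).trans ?_
      rw [nsmul_eq_mul]
      have h4 : ((chart F J).card : ℝ) ≤ s ^ (2 * (k * (g - k))) := by
        rw [pow_mul, hq]
        exact_mod_cast card_chart_le F J
      calc _ ≤ s ^ (2 * (k * (g - k))) * _ := mul_le_mul_of_nonneg_right h4 (by positivity)
        _ = _ := by rw [← pow_add]; congr 1; ring
    refine (Finset.sum_le_card_nsmul _ _ _ (fun J _ => h2 J)).trans ?_
    rw [nsmul_eq_mul, Finset.card_univ]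
  · intro S hS
    rw [Finset.mem_filter] at hS
    obtain ⟨J, P, Q, hP, hPQ, hQ⟩ := exists_factor S hS.2.2
    refine ⟨⟨J, P, Q⟩, ?_, hPQ.symm, ?_⟩
    · simp only [T, Finset.mem_sigma, Finset.mem_univ, true_and, and_true]
      exact mem_chart.2 hP
    · have h := hS.2.1
      have : Q * P = b • (1 : Matrix (Fin k) (Fin k) F) := by
        apply chart_cancel hP
        apply surj_cancel hQ
        rw [hPQ] at h
        simpa [Matrix.mul_assoc] using h
      simp [f, this]

theorem card_sqrt_square (F : Type) [Field F] [Fintype F] [DecidableEq F] (s : ℝ) (hs : 1 ≤ s)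
    (hq : s ^ 2 = Fintype.card F) (g : ℕ) (c : F) :
    ((Finset.univ.filter (fun D : Matrix (Fin g) (Fin g) F =>
      D * D = (c * c) • (1 : Matrix (Fin g) (Fin g) F))).card : ℝ)
      ≤ (∑ k ∈ Finset.range (g + 1), (Fintype.card (Fin k ↪ Fin g) : ℝ)) * s ^ (g ^ 2) := by
  classical
  have h1 : (Finset.univ.filter (fun D : Matrix (Fin g) (Fin g) F =>
      D * D = (c * c) • (1 : Matrix (Fin g) (Fin g) F))).card ≤
      ∑ k ∈ Finset.range (g + 1), (Finset.univ.filter (fun R : Matrix (Fin g) (Fin g) F =>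
        R * R = (-2 * c) • R ∧ R.rank = k)).card := by
    refine le_trans ?_ Finset.card_biUnion_le
    apply Finset.card_le_card_of_injOn (fun D => D - c • (1 : Matrix (Fin g) (Fin g) F))
    · intro D hD
      have hD : D * D = (c * c) • (1 : Matrix (Fin g) (Fin g) F) := by simpa using hD
      simp only [Finset.coe_biUnion, Set.mem_iUnion, Finset.mem_coe, Finset.mem_filter,
        Finset.mem_univ, true_and, Finset.mem_range]
      refine ⟨_, ?_, ?_, rfl⟩
      · have := Matrix.rank_le_height (D - c • (1 : Matrix (Fin g) (Fin g) F))
        omega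
      · simp only [sub_mul, mul_sub, hD, smul_mul_assoc, mul_smul_comm, one_mul, mul_one, smul_sub,
          smul_smul]
        module
    · intro D _ D' _ h
      simpa using h
  have h1' : ((Finset.univ.filter (fun D : Matrix (Fin g) (Fin g) F =>
      D * D = (c * c) • (1 : Matrix (Fin g) (Fin g) F))).card : ℝ) ≤
      ∑ k ∈ Finset.range (g + 1), ((Finset.univ.filter (fun R : Matrix (Fin g) (Fin g) F =>
        R * R = (-2 * c) • R ∧ R.rank = k)).card : ℝ) := by exact_mod_cast h1
  refine h1'.trans ?_
  rw [Finset.sum_mul]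
  apply Finset.sum_le_sum
  intro k hk
  refine (card_sqrt_square_rank F s hs hq g k _).trans ?_
  apply mul_le_mul_of_nonneg_left _ (by positivity)
  apply pow_le_pow_right₀ hs
  have hk' : k ≤ g := by rw [Finset.mem_range] at hk; omega
  obtain ⟨j, rfl⟩ := Nat.exists_eq_add_of_le hk'
  rw [Nat.add_sub_cancel_left]
  zify
  nlinarith [sq_nonneg ((k : ℤ) - j)]

/-- Span of `e_i, D e_i`, `i ∈ I`. -/
def spn {F : Type} [Field F] {g : ℕ} (D : Matrix (Fin g) (Fin g) F) (I : Finset (Fin g)) :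
    Submodule F (Fin g → F) :=
  Submodule.span F {v | ∃ i ∈ I, v = Pi.single i 1 ∨ v = D.mulVec (Pi.single i 1)}

theorem spn_inv {F : Type} [Field F] {g : ℕ} (D : Matrix (Fin g) (Fin g) F)
    (a : F) (hD : D * D = a • (1 : Matrix (Fin g) (Fin g) F)) (I : Finset (Fin g)) (v : Fin g → F)
    (hv : v ∈ spn D I) : D.mulVec v ∈ spn D I := by
  induction hv using Submodule.span_induction with
  | mem x hx =>
    obtain ⟨i, hi, rfl | rfl⟩ := hx
    · exact Submodule.subset_span ⟨i, hi, Or.inr rfl⟩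
    · rw [Matrix.mulVec_mulVec, hD, Matrix.smul_mulVec, Matrix.one_mulVec]
      exact Submodule.smul_mem _ _ (Submodule.subset_span ⟨i, hi, Or.inl rfl⟩)
  | zero => simp
  | add x y _ _ hx hy => rw [Matrix.mulVec_add]; exact Submodule.add_mem _ hx hy
  | smul c x _ hx => rw [Matrix.mulVec_smul]; exact Submodule.smul_mem _ _ hx

theorem exists_spn {F : Type} [Field F] {g : ℕ} (D : Matrix (Fin g) (Fin g) F)
    (a : F) (ha : ∀ c, a ≠ c * c) (hD : D * D = a • (1 : Matrix (Fin g) (Fin g) F)) :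
    ∃ I : Finset (Fin g), spn D I = ⊤ ∧ 2 * I.card ≤ g := by
  classical
  obtain ⟨I, hI, hmax⟩ := Finset.exists_max_image
    (Finset.univ.filter (fun I : Finset (Fin g) => 2 * I.card ≤ Module.finrank F (spn D I)))
    Finset.card ⟨∅, by simp⟩
  rw [Finset.mem_filter] at hI
  have hle : Module.finrank F (spn D I) ≤ g := by
    simpa using Submodule.finrank_le (spn D I)
  refine ⟨I, ?_, hI.2.trans hle⟩
  by_contra hne
  have : ∃ j, Pi.single j (1 : F) ∉ spn D I := by
    by_contra! h
    apply hne
    rw [eq_top_iff]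
    intro v _
    rw [pi_eq_sum_univ v]
    apply Submodule.sum_mem
    intro i _
    apply Submodule.smul_mem
    convert h i using 1
    ext k
    simp [Pi.single_apply, eq_comm]
  obtain ⟨j, hj⟩ := this
  have hjI : j ∉ I := fun h => hj (Submodule.subset_span ⟨j, h, Or.inl rfl⟩)
  set e : Fin g → F := Pi.single j 1 with he
  have hlt1 : spn D I < spn D I ⊔ Submodule.span F {e} := by
    refine lt_of_le_of_ne le_sup_left ?_
    intro h
    apply hj
    rw [h]
    exact Submodule.mem_sup_right (Submodule.mem_span_singleton_self e)
  have hDe : D.mulVec e ∉ spn D I ⊔ Submodule.span F {e} := by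
    intro h
    obtain ⟨w, hw, z, hz, hwz⟩ := Submodule.mem_sup.1 h
    obtain ⟨lam, rfl⟩ := Submodule.mem_span_singleton.1 hz
    have h1 : a • e = D.mulVec w + lam • (w + lam • e) := by
      have : D.mulVec (D.mulVec e) = a • e := by
        rw [Matrix.mulVec_mulVec, hD, Matrix.smul_mulVec, Matrix.one_mulVec]
      rw [← this]
      conv_lhs => rw [← hwz]
      rw [Matrix.mulVec_add, Matrix.mulVec_smul, ← hwz]
    have h2 : (a - lam * lam) • e ∈ spn D I := by
      have : (a - lam * lam) • e = D.mulVec w + lam • w := by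
        rw [sub_smul, h1, smul_add, smul_smul]
        abel
      rw [this]
      exact Submodule.add_mem _ (spn_inv D a hD I w hw) (Submodule.smul_mem _ _ hw)
    apply hj
    exact (Submodule.smul_mem_iff _ (sub_ne_zero.2 (ha lam))).1 h2
  have hle' : spn D I ⊔ Submodule.span F {e} ≤ spn D (insert j I) := by
    apply sup_le
    · apply Submodule.span_mono
      rintro v ⟨i, hi, h⟩
      exact ⟨i, Finset.mem_insert_of_mem hi, h⟩
    · rw [Submodule.span_singleton_le_iff_mem]
      exact Submodule.subset_span ⟨j, Finset.mem_insert_self _ _, Or.inl rfl⟩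
  have hlt2 : spn D I ⊔ Submodule.span F {e} < spn D (insert j I) := by
    refine lt_of_le_of_ne hle' ?_
    intro h
    apply hDe
    rw [h]
    exact Submodule.subset_span ⟨j, Finset.mem_insert_self _ _, Or.inr rfl⟩
  have f1 := Submodule.finrank_lt_finrank_of_lt hlt1
  have f2 := Submodule.finrank_lt_finrank_of_lt hlt2
  have hc := Finset.card_insert_of_notMem hjI
  have := hmax (insert j I) (by
    rw [Finset.mem_filter]
    refine ⟨Finset.mem_univ _, ?_⟩
    omega)
  omega

theorem card_sqrt_nonsquare (F : Type) [Field F] [Fintype F] [DecidableEq F] (s : ℝ) (hs : 1 ≤ s)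
    (hq : s ^ 2 = Fintype.card F) (g : ℕ) (a : F) (ha : ∀ c, a ≠ c * c) :
    ((Finset.univ.filter (fun D : Matrix (Fin g) (Fin g) F =>
      D * D = a • (1 : Matrix (Fin g) (Fin g) F))).card : ℝ) ≤ 2 ^ g * s ^ (g ^ 2) := by
  classical
  set A := Finset.univ.filter (fun D : Matrix (Fin g) (Fin g) F =>
      D * D = a • (1 : Matrix (Fin g) (Fin g) F)) with hA
  have hex : ∀ D ∈ A, ∃ I : Finset (Fin g), spn D I = ⊤ ∧ 2 * I.card ≤ g := by
    intro D hD
    exact exists_spn D a ha (Finset.mem_filter.1 hD).2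
  choose! I hI1 hI2 using hex
  have h1 : (A.card : ℝ) = ∑ I' : Finset (Fin g), ((A.filter (fun D => I D = I')).card : ℝ) := by
    have := Finset.card_eq_sum_card_fiberwise (s := A) (f := I) (t := Finset.univ)
      (fun _ _ => by simp)
    exact_mod_cast this
  rw [h1]
  have h2 : ∀ I' : Finset (Fin g), ((A.filter (fun D => I D = I')).card : ℝ) ≤ s ^ (g ^ 2) := by
    intro I'
    rcases (A.filter (fun D => I D = I')).eq_empty_or_nonempty with h | ⟨D0, h0⟩
    · rw [h, Finset.card_empty, Nat.cast_zero]; have : 0 ≤ s := by linarith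
      positivity
    have hc : 2 * I'.card ≤ g := by
      rw [Finset.mem_filter] at h0
      rw [← h0.2]; exact hI2 D0 h0.1
    have h3 : (A.filter (fun D => I D = I')).card ≤
        (Finset.univ : Finset (I' → Fin g → F)).card := by
      apply Finset.card_le_card_of_injOn (fun D i j => D j i.1)
      · intro D _; simp
      · intro D hD D' hD' h
        simp only [Finset.coe_filter, Set.mem_ofPred_eq] at hD hD'
        have e1 : D * D = a • (1 : Matrix (Fin g) (Fin g) F) := (Finset.mem_filter.1 hD.1).2
        have e2 : D' * D' = a • (1 : Matrix (Fin g) (Fin g) F) := (Finset.mem_filter.1 hD'.1).2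
        have hcol : ∀ i ∈ I', D.mulVec (Pi.single i 1) = D'.mulVec (Pi.single i 1) := by
          intro i hi
          ext j
          have := congrFun (congrFun h ⟨i, hi⟩) j
          simpa using this
        have hall : ∀ v ∈ spn D I', D.mulVec v = D'.mulVec v := by
          intro v hv
          induction hv using Submodule.span_induction with
          | mem x hx =>
            obtain ⟨i, hi, rfl | rfl⟩ := hx
            · exact hcol i hi
            · rw [Matrix.mulVec_mulVec, e1, hcol i hi, Matrix.mulVec_mulVec, e2]
          | zero => simp
          | add x y _ _ hx hy => rw [Matrix.mulVec_add, Matrix.mulVec_add, hx, hy]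
          | smul c x _ hx => rw [Matrix.mulVec_smul, Matrix.mulVec_smul, hx]
        apply Matrix.toLin'.injective
        apply LinearMap.ext
        intro v
        rw [Matrix.toLin'_apply, Matrix.toLin'_apply]
        apply hall
        have := hI1 D hD.1
        rw [hD.2] at this
        rw [this]; trivial
    have h4 : (Finset.univ : Finset (I' → Fin g → F)).card = Fintype.card F ^ (g * I'.card) := by
      rw [Finset.card_univ, Fintype.card_fun, Fintype.card_fun, Fintype.card_fin,
        Fintype.card_coe, ← pow_mul]
    rw [h4] at h3
    calc _ ≤ (Fintype.card F : ℝ) ^ (g * I'.card) := by exact_mod_cast h3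
      _ = s ^ (2 * (g * I'.card)) := by rw [← hq, ← pow_mul]
      _ ≤ _ := pow_le_pow_right₀ hs (by nlinarith)
  refine (Finset.sum_le_card_nsmul _ _ _ (fun J _ => h2 J)).trans ?_
  rw [nsmul_eq_mul, Finset.card_univ, Fintype.card_finset, Fintype.card_fin]
  push_cast
  exact le_rfl

/-- The constant for the number of square roots of a scalar. -/
noncomputable def Csqrt (g : ℕ) : ℝ :=
  (∑ k ∈ Finset.range (g + 1), (Fintype.card (Fin k ↪ Fin g) : ℝ)) + 2 ^ g

theorem Csqrt_nonneg (g : ℕ) : 0 ≤ Csqrt g := by unfold Csqrt; positivity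

theorem card_sqrt (F : Type) [Field F] [Fintype F] [DecidableEq F] (s : ℝ) (hs : 1 ≤ s)
    (hq : s ^ 2 = Fintype.card F) (g : ℕ) (a : F) :
    ((Finset.univ.filter (fun D : Matrix (Fin g) (Fin g) F =>
      D * D = a • (1 : Matrix (Fin g) (Fin g) F))).card : ℝ) ≤ Csqrt g * s ^ (g ^ 2) := by
  have hs0 : 0 ≤ s ^ (g ^ 2) := by have : 0 ≤ s := by linarith
                                   positivity
  by_cases h : ∃ c, a = c * c
  · obtain ⟨c, rfl⟩ := h
    refine (card_sqrt_square F s hs hq g c).trans ?_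
    apply mul_le_mul_of_nonneg_right _ hs0
    unfold Csqrt
    have : (0 : ℝ) ≤ 2 ^ g := by positivity
    linarith
  · push Not at h
    refine (card_sqrt_nonsquare F s hs hq g a h).trans ?_
    apply mul_le_mul_of_nonneg_right _ hs0
    unfold Csqrt
    have : (0 : ℝ) ≤ ∑ k ∈ Finset.range (g + 1), (Fintype.card (Fin k ↪ Fin g) : ℝ) := by
      positivity
    linarith

theorem exists_ker_chart {F : Type} [Field F] {n g : ℕ} (U : Matrix (Fin n) (Fin n) F) (a : F)
    (h : Module.finrank F (LinearMap.ker (Matrix.toLin' (U * U - a • 1))) = g) :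
    ∃ (J : Fin g ↪ Fin n) (P : Matrix (Fin n) (Fin g) F) (D : Matrix (Fin g) (Fin g) F),
      P.submatrix J id = 1 ∧ D * D = a • (1 : Matrix (Fin g) (Fin g) F) ∧ U * P = P * D := by
  set Y := LinearMap.ker (Matrix.toLin' (U * U - a • (1 : Matrix (Fin n) (Fin n) F))) with hY
  obtain ⟨l, hl⟩ := LinearMap.exists_leftInverse_of_injective Y.subtype (by simp)
  have hl' : ∀ y : Y, l y = y := fun w => LinearMap.congr_fun hl w
  let S := LinearMap.toMatrix' (Y.subtype ∘ₗ l)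
  have hS : ∀ v, S.mulVec v = (l v : Fin n → F) := by
    intro v
    rw [← Matrix.toLin'_apply, Matrix.toLin'_toMatrix']; rfl
  have hrank : S.rank = g := by
    have : LinearMap.range (Matrix.toLin' S) = Y := by
      ext v
      rw [LinearMap.mem_range]
      constructor
      · rintro ⟨w, rfl⟩
        rw [Matrix.toLin'_apply, hS]
        exact (l w).2
      · intro hv
        refine ⟨v, ?_⟩
        rw [Matrix.toLin'_apply, hS, hl' ⟨v, hv⟩]
    rw [Matrix.rank, ← Matrix.toLin'_apply', this, h]
  obtain ⟨J, P, Q, hP, hPQ, hQ⟩ := exists_factor S hrank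
  have hPY : ∀ w, P.mulVec w ∈ Y := by
    intro w
    obtain ⟨v, rfl⟩ := hQ w
    rw [Matrix.toLin'_apply, Matrix.mulVec_mulVec, ← hPQ, hS]
    exact (l v).2
  have hYU : ∀ v, v ∈ Y ↔ U.mulVec (U.mulVec v) = a • v := by
    intro v
    rw [hY, LinearMap.mem_ker, Matrix.toLin'_apply, Matrix.sub_mulVec, Matrix.smul_mulVec,
      Matrix.one_mulVec, sub_eq_zero, Matrix.mulVec_mulVec]
  have hext : ∀ {m k : ℕ} (X Z : Matrix (Fin m) (Fin k) F), (∀ v, X.mulVec v = Z.mulVec v) → X = Z := by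
    intro m k X Z h
    apply Matrix.toLin'.injective
    apply LinearMap.ext
    exact h
  have h1 : U * (U * P) = a • P := by
    apply hext
    intro v
    rw [← Matrix.mulVec_mulVec, ← Matrix.mulVec_mulVec, (hYU _).1 (hPY v), Matrix.smul_mulVec]
  have h2 : U * P = P * (Q * (U * P)) := by
    rw [← Matrix.mul_assoc, ← hPQ]
    apply hext
    intro v
    rw [← Matrix.mulVec_mulVec, ← Matrix.mulVec_mulVec, ← Matrix.mulVec_mulVec, hS]
    have hmem : U.mulVec (P.mulVec v) ∈ Y := by
      rw [hYU, (hYU _).1 (hPY v), Matrix.mulVec_smul]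
    rw [hl' ⟨_, hmem⟩]
  refine ⟨J, P, Q * (U * P), hP, ?_, h2⟩
  apply chart_cancel hP
  rw [← Matrix.mul_assoc, ← h2]
  rw [Matrix.mul_assoc, ← h2, h1]
  simp

theorem card_ker (F : Type) [Field F] [Fintype F] [DecidableEq F] (s : ℝ) (hs : 1 ≤ s)
    (hq : s ^ 2 = Fintype.card F) (n g : ℕ) (a : F) :
    ((Finset.univ.filter (fun U : Matrix (Fin n) (Fin n) F =>
      Module.finrank F (LinearMap.ker (Matrix.toLin' (U * U - a • 1))) = g)).card : ℝ) ≤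
      (Fintype.card (Fin g ↪ Fin n) : ℝ) * Csqrt g * s ^ (2 * n ^ 2 - g ^ 2) := by
  classical
  have hs0 : 0 ≤ s := by linarith
  have hC := Csqrt_nonneg g
  let T : Finset (Σ _ : (Fin g ↪ Fin n), Σ _ : Matrix (Fin n) (Fin g) F,
      Matrix (Fin n) (Fin n) F) :=
    Finset.univ.sigma (fun J => (chart F J).sigma (fun _ => Finset.univ))
  let ind : Matrix (Fin n) (Fin g) F → Matrix (Fin n) (Fin g) F → ℝ := fun P M =>
    if ∃ D : Matrix (Fin g) (Fin g) F, D * D = a • (1 : Matrix (Fin g) (Fin g) F) ∧ M = P * D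
      then 1 else 0
  have hind : ∀ P M, 0 ≤ ind P M := by
    intro P M; simp only [ind]; split_ifs <;> norm_num
  let f : (Σ _ : (Fin g ↪ Fin n), Σ _ : Matrix (Fin n) (Fin g) F,
      Matrix (Fin n) (Fin n) F) → ℝ :=
    fun t => ind t.2.1 (t.2.2 * t.2.1)
  have h1 := sum_le_of_cover
    (Finset.univ.filter (fun U : Matrix (Fin n) (Fin n) F =>
      Module.finrank F (LinearMap.ker (Matrix.toLin' (U * U - a • 1))) = g)) T
    (fun _ => 1) f (fun t _ => hind _ _) (fun t => t.2.2) ?_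
  · rw [Finset.sum_const, nsmul_eq_mul, mul_one] at h1
    refine h1.trans ?_
    rw [Finset.sum_sigma]
    have h2 : ∀ J : (Fin g ↪ Fin n), ∑ x ∈ (chart F J).sigma (fun _ => Finset.univ), f ⟨J, x⟩ ≤
        Csqrt g * s ^ (2 * n ^ 2 - g ^ 2) := by
      intro J
      have hgn : g ≤ n := by simpa using Fintype.card_le_of_embedding J
      rw [Finset.sum_sigma]
      have h3 : ∀ P ∈ chart F J, ∑ Q, f ⟨J, ⟨P, Q⟩⟩ ≤
          s ^ (2 * (n * (n - g))) * (Csqrt g * s ^ (g ^ 2)) := by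
        intro P hP
        simp only [f]
        have := sum_mul_chart_le (m := n) (mem_chart.1 hP) (ind P) (hind P)
        rw [← hq, ← pow_mul] at this
        refine this.trans ?_
        apply mul_le_mul_of_nonneg_left _ (by positivity)
        refine le_trans ?_ (card_sqrt F s hs hq g a)
        simp only [ind]
        rw [Finset.sum_boole]
        norm_cast
        have hsub : (Finset.univ.filter (fun M : Matrix (Fin n) (Fin g) F =>
            ∃ D : Matrix (Fin g) (Fin g) F, D * D = a • (1 : Matrix (Fin g) (Fin g) F) ∧
              M = P * D)) ⊆ (Finset.univ.filter (fun D : Matrix (Fin g) (Fin g) F =>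
            D * D = a • (1 : Matrix (Fin g) (Fin g) F))).image (fun D => P * D) := by
          intro M hM
          obtain ⟨D, hD, rfl⟩ := (Finset.mem_filter.1 hM).2
          exact Finset.mem_image_of_mem _ (Finset.mem_filter.2 ⟨Finset.mem_univ _, hD⟩)
        exact (Finset.card_le_card hsub).trans Finset.card_image_le
      refine (Finset.sum_le_card_nsmul _ _ _ h3).trans ?_
      rw [nsmul_eq_mul]
      have h4 : ((chart F J).card : ℝ) ≤ s ^ (2 * (g * (n - g))) := by
        rw [pow_mul, hq]
        exact_mod_cast card_chart_le F J
      calc _ ≤ s ^ (2 * (g * (n - g))) * _ := mul_le_mul_of_nonneg_right h4 (by positivity)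
        _ = Csqrt g * s ^ (2 * (g * (n - g)) + 2 * (n * (n - g)) + g ^ 2) := by
          rw [pow_add, pow_add]; ring
        _ = _ := by
          congr 2
          obtain ⟨j, rfl⟩ := Nat.exists_eq_add_of_le hgn
          rw [Nat.add_sub_cancel_left]
          symm
          apply Nat.sub_eq_of_eq_add
          ring
    refine (Finset.sum_le_card_nsmul _ _ _ (fun J _ => h2 J)).trans ?_
    rw [nsmul_eq_mul, Finset.card_univ, mul_assoc]
  · intro U hU
    rw [Finset.mem_filter] at hU
    obtain ⟨J, P, D, hP, hD, hUP⟩ := exists_ker_chart U a hU.2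
    refine ⟨⟨J, P, U⟩, ?_, rfl, ?_⟩
    · simp only [T, Finset.mem_sigma, Finset.mem_univ, true_and, and_true]
      exact mem_chart.2 hP
    · have : ∃ D : Matrix (Fin g) (Fin g) F, D * D = a • (1 : Matrix (Fin g) (Fin g) F) ∧
          U * P = P * D := ⟨D, hD, hUP⟩
      simp only [f, ind]
      rw [if_pos this]

theorem rank_block (L : Type*) [Field L] (p r : ℕ) :
    (Matrix.fromBlocks (1 : Matrix (Fin p) (Fin p) L)
      (0 : Matrix (Fin p) (Fin r) L) (0 : Matrix (Fin r) (Fin p) L) 0).rank = p := by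
  classical
  have : Matrix.fromBlocks (1 : Matrix (Fin p) (Fin p) L) (0 : Matrix (Fin p) (Fin r) L)
      (0 : Matrix (Fin r) (Fin p) L) 0
      = Matrix.diagonal (Sum.elim (fun _ => 1) (fun _ => 0)) := by
    rw [← Matrix.fromBlocks_diagonal]
    simp
  rw [this, Matrix.rank_diagonal]
  have : Fintype.card {i : Fin p ⊕ Fin r //
      (Sum.elim (fun _ => 1) (fun _ => 0) : Fin p ⊕ Fin r → L) i ≠ 0} = Fintype.card (Fin p) := by
    apply Fintype.card_congr
    refine ⟨fun x => match x with
      | ⟨Sum.inl i, _⟩ => i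
      | ⟨Sum.inr i, h⟩ => absurd rfl h, fun i => ⟨Sum.inl i, by simp⟩, ?_, ?_⟩
    · rintro ⟨i | i, h⟩
      · rfl
      · exact absurd rfl h
    · intro i; rfl
  rw [this, Fintype.card_fin]

theorem rank_map_hom {F K : Type*} [Field F] [Field K] (σ : F →+* K) {n : ℕ}
    (A : Matrix (Fin n) (Fin n) F) : (A.map σ).rank = A.rank := by
  classical
  obtain ⟨V, U, e, hV, hU, h⟩ := Matrix.exists_rank_normal_form A
  have hV' := (Matrix.isUnit_iff_isUnit_det _).1 hV
  have hU' := (Matrix.isUnit_iff_isUnit_det _).1 hU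
  have hVK : IsUnit (V.map σ).det := by
    have := hV'.map σ
    rwa [RingHom.map_det] at this
  have hUK : IsUnit (U.map σ).det := by
    have := hU'.map σ
    rwa [RingHom.map_det] at this
  have hK : V.map σ * A.map σ * U.map σ = (Matrix.fromBlocks 1 0 0 0).submatrix e e := by
    rw [← Matrix.map_mul, ← Matrix.map_mul, h]
    ext i j
    rcases hi : e i with x | x <;> rcases hj : e j with y | y <;>
      simp [hi, hj, Matrix.one_apply, apply_ite σ]
  have r1 := Matrix.rank_mul_eq_left_of_isUnit_det (U.map σ) (V.map σ * A.map σ) hUK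
  rw [hK, Matrix.rank_mul_eq_right_of_isUnit_det _ _ hVK, Matrix.rank_submatrix] at r1
  rw [← r1]
  exact rank_block K _ _

theorem finrank_ker_eq {F : Type*} [Field F] {n : ℕ} (A : Matrix (Fin n) (Fin n) F) :
    Module.finrank F (LinearMap.ker (Matrix.toLin' A)) = n - A.rank := by
  have := LinearMap.finrank_range_add_finrank_ker (Matrix.toLin' A)
  rw [Matrix.rank, ← Matrix.toLin'_apply']
  simp only [Module.finrank_fin_fun] at this
  omega

theorem finrank_ker_map {F K : Type*} [Field F] [Field K] (σ : F →+* K) {n : ℕ}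
    (A : Matrix (Fin n) (Fin n) F) :
    Module.finrank K (LinearMap.ker (Matrix.toLin' (A.map σ))) =
      Module.finrank F (LinearMap.ker (Matrix.toLin' A)) := by
  rw [finrank_ker_eq, finrank_ker_eq, rank_map_hom]

/-- Dimension of the `a`-eigenspace of `U ^ 2`. -/
noncomputable def dk {K : Type*} [Field K] {n : ℕ} (U : Matrix (Fin n) (Fin n) K) (a : K) : ℕ :=
  Module.finrank K (LinearMap.ker (Matrix.toLin' (U * U - a • (1 : Matrix (Fin n) (Fin n) K))))

theorem dk_map {F K : Type*} [Field F] [Field K] (σ : F →+* K) {n : ℕ}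
    (U : Matrix (Fin n) (Fin n) F) (a : F) : dk (U.map σ) (σ a) = dk U a := by
  unfold dk
  have : (U * U - a • (1 : Matrix (Fin n) (Fin n) F)).map σ
      = U.map σ * U.map σ - σ a • (1 : Matrix (Fin n) (Fin n) K) := by
    ext i j
    simp [Matrix.mul_apply, Matrix.one_apply, apply_ite σ]
  rw [← this, finrank_ker_map σ]

theorem mem_dk {K : Type*} [Field K] {n : ℕ} {U : Matrix (Fin n) (Fin n) K} {a : K}
    {v : Fin n → K} :
    v ∈ LinearMap.ker (Matrix.toLin' (U * U - a • (1 : Matrix (Fin n) (Fin n) K))) ↔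
      (U * U).mulVec v = a • v := by
  rw [LinearMap.mem_ker, Matrix.toLin'_apply, Matrix.sub_mulVec, Matrix.smul_mulVec,
      Matrix.one_mulVec, sub_eq_zero]

theorem dk_disjoint {K : Type*} [Field K] {n : ℕ} (U : Matrix (Fin n) (Fin n) K) {a b : K}
    (h : a ≠ b) :
    Disjoint (LinearMap.ker (Matrix.toLin' (U * U - a • (1 : Matrix (Fin n) (Fin n) K))))
      (LinearMap.ker (Matrix.toLin' (U * U - b • (1 : Matrix (Fin n) (Fin n) K)))) := by
  rw [Submodule.disjoint_def]
  intro v h1 h2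
  rw [mem_dk] at h1 h2
  rw [h1, ← sub_eq_zero, ← sub_smul] at h2
  exact (smul_eq_zero.1 h2).resolve_left (sub_ne_zero.2 h)

theorem dk_add_le {K : Type*} [Field K] {n : ℕ} (U : Matrix (Fin n) (Fin n) K) {a b : K}
    (h : a ≠ b) : dk U a + dk U b ≤ n := by
  have := Submodule.finrank_add_finrank_le_of_disjoint (dk_disjoint U h)
  simpa [dk] using this

theorem acE_closure_aux {F : Type} [Field F] {n d : ℕ} (K : Type) [Field K] [Algebra F K]
    (U : Matrix (Fin n) (Fin n) F) (b : Fin d → Matrix (Fin n) (Fin n) F)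
    (h1 : LinearIndependent F b) (hb : ∀ i, U * b i + b i * U = 0) :
    d ≤ Module.finrank K (acE (Matrix.toLin' (U.map (algebraMap F K)))) := by
  classical
  let v : Fin d → (Fin n × Fin n) → F := fun i p => (b i) p.1 p.2
  have hv : LinearIndependent F v := by
    rw [Fintype.linearIndependent_iff] at h1 ⊢
    intro c hc i
    apply h1 c
    ext x y
    have := congrFun hc (x, y)
    simp only [v, Finset.sum_apply, Pi.smul_apply] at this
    rw [Matrix.sum_apply]
    exact this
  have hvK := (linearIndependent_algebraMap_comp_iff (S := K)).2 hv
  have hmem : ∀ i, Matrix.toLin' ((b i).map (algebraMap F K)) ∈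
      acE (Matrix.toLin' (U.map (algebraMap F K))) := by
    intro i w
    have h' := congrArg (fun Z : Matrix (Fin n) (Fin n) F => Z.map (algebraMap F K)) (hb i)
    simp only [Matrix.map_add _ (map_add (algebraMap F K)), Matrix.map_mul] at h'
    have h'' := congrArg (fun Z => Matrix.mulVec Z w) h'
    simp only [Matrix.add_mulVec] at h''
    simpa [Matrix.toLin'_apply] using h''
  have hw : LinearIndependent K (fun i => Matrix.toLin' ((b i).map (algebraMap F K))) := by
    rw [Fintype.linearIndependent_iff] at hvK
    refine Fintype.linearIndependent_iff.2 ?_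
    intro c hc
    apply hvK c
    have h2 : ∑ i, c i • (b i).map (algebraMap F K) = 0 := by
      apply Matrix.toLin'.injective
      rw [map_sum, map_zero, ← hc]
      simp only [map_smul]
    ext ⟨x, y⟩
    have h3 := congrFun (congrFun h2 x) y
    rw [Matrix.sum_apply] at h3
    rw [Finset.sum_apply]
    exact h3
  have hs : Submodule.span K (Set.range (fun i => Matrix.toLin' ((b i).map (algebraMap F K)))) ≤
      acE (Matrix.toLin' (U.map (algebraMap F K))) := by
    rw [Submodule.span_le]
    rintro _ ⟨i, rfl⟩
    exact hmem i
  have h3 := Submodule.finrank_mono hs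
  rw [finrank_span_eq_card hw, Fintype.card_fin] at h3
  exact h3

theorem rho_le_closure {F : Type} [Field F] [Fintype F] {n : ℕ} (K : Type) [Field K] [Algebra F K]
    (U : Matrix (Fin n) (Fin n) F) :
    rho F U ≤ Module.finrank K (acE (Matrix.toLin' (U.map (algebraMap F K)))) := by
  let b := Module.finBasis F (radical F U)
  have h1 : LinearIndependent F (fun i => ((b i : Matrix (Fin n) (Fin n) F))) :=
    b.linearIndependent.map' (radical F U).subtype (by simp)
  exact acE_closure_aux K U _ h1 (fun i => (mem_radical_iff U _).1 (b i).2)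

theorem pow_card_fixed {F : Type} [Field F] [Fintype F] {K : Type} [Field K] [Algebra F K]
    (x : K) (hx : x ^ Fintype.card F = x) : ∃ a : F, algebraMap F K a = x := by
  classical
  by_contra! h
  have h1 : 1 < Fintype.card F := Fintype.one_lt_card
  have hne := FiniteField.X_pow_card_sub_X_ne_zero K h1
  have hsub : insert x (Finset.univ.image (algebraMap F K)) ⊆
      (Polynomial.X ^ Fintype.card F - Polynomial.X : Polynomial K).roots.toFinset := by
    intro y hy
    rw [Multiset.mem_toFinset, Polynomial.mem_roots hne, Polynomial.IsRoot.def]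
    rw [Finset.mem_insert, Finset.mem_image] at hy
    rcases hy with rfl | ⟨a, _, rfl⟩
    · simp [hx]
    · simp [← map_pow, FiniteField.pow_card]
  have h2 := Finset.card_le_card hsub
  rw [Finset.card_insert_of_notMem (by simpa using h),
    Finset.card_image_of_injective _ (algebraMap F K).injective, Finset.card_univ] at h2
  have h3 := Multiset.toFinset_card_le
    (Polynomial.X ^ Fintype.card F - Polynomial.X : Polynomial K).roots
  have h4 := Polynomial.card_roots' (Polynomial.X ^ Fintype.card F - Polynomial.X : Polynomial K)
  rw [FiniteField.X_pow_card_sub_X_natDegree_eq K h1] at h4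
  omega

/-- peeling bound specialised. -/
theorem peel_bound {K : Type} [Field K] [IsAlgClosed K] (h2 : (2 : K) ≠ 0) {n : ℕ}
    (U : Matrix (Fin n) (Fin n) K) (hU : Function.Injective (Matrix.toLin' U)) (M : ℕ) (hM0 : 1 ≤ M)
    (hM : ∀ a, dk U a ≤ M) :
    Module.finrank K (acE (Matrix.toLin' U)) ≤ 2 * (n * (M * M / 4) / M) := by
  refine finrank_acE_peel h2 M (fun k => 2 * (k * (M * M / 4) / M)) ?_ ?_ n (Matrix.toLin' U) hU
    (by simp) ?_
  · intro a b k h1 h2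
    have key : a * b * M ≤ (a + b) * (M * M / 4) := by
      rcases Nat.lt_or_ge (a + b) M with h | h
      · have e1 : 4 * (a * b) ≤ (a + b) * (a + b) := by
          zify; nlinarith [sq_nonneg ((a : ℤ) - b)]
        have e2 : (a + b) * M + 1 ≤ M * M := by nlinarith
        have e3 : M * M ≤ 4 * (M * M / 4) + 3 := by omega
        have e5 : M * M % 4 = 0 ∨ M * M % 4 = 1 := by
          rcases Nat.even_or_odd' M with ⟨c, rfl | rfl⟩
          · left
            have : 2 * c * (2 * c) = 4 * (c * c) := by ring
            omega
          · right
            have : (2 * c + 1) * (2 * c + 1) = 4 * (c * c + c) + 1 := by ring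
            omega
        have e4 : (a + b) * M ≤ 4 * (M * M / 4) := by omega
        have e6 : (a + b) * ((a + b) * M) ≤ (a + b) * (4 * (M * M / 4)) :=
          Nat.mul_le_mul_left _ e4
        have e7 : 4 * (a * b) * M ≤ (a + b) * (a + b) * M := Nat.mul_le_mul_right _ e1
        nlinarith
      · have hM' : M = a + b := by omega
        have e1 : a * b ≤ M * M / 4 := by
          rw [Nat.le_div_iff_mul_le (by norm_num), hM']
          zify; nlinarith [sq_nonneg ((a : ℤ) - b)]
        calc a * b * M ≤ M * M / 4 * M := Nat.mul_le_mul_right _ e1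
          _ = (a + b) * (M * M / 4) := by rw [mul_comm]; rw [← hM']
    have : a * b + k * (M * M / 4) / M ≤ (k + (a + b)) * (M * M / 4) / M := by
      rw [Nat.le_div_iff_mul_le hM0, add_mul, add_mul]
      have := Nat.div_mul_le_self (k * (M * M / 4)) M
      omega
    show 2 * (a * b) + 2 * (k * (M * M / 4) / M) ≤ 2 * ((k + (a + b)) * (M * M / 4) / M)
    omega
  · intro k l hkl
    show 2 * (k * (M * M / 4) / M) ≤ 2 * (l * (M * M / 4) / M)
    gcongr
  · intro a
    have := hM a
    unfold dk at this
    rw [map_sub, map_smul, Matrix.toLin'_mul, Matrix.toLin'_one] at this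
    exact this

theorem eig_neg {K V : Type*} [Field K] [IsAlgClosed K] [AddCommGroup V] [Module K V]
    [FiniteDimensional K V] (U X : V →ₗ[K] V) (hX : X ≠ 0) (h : ∀ v, U (X v) + X (U v) = 0) :
    ∃ μ : K, (∃ v, v ≠ 0 ∧ U v = μ • v) ∧ (∃ v, v ≠ 0 ∧ U v = (-μ) • v) := by
  have hW : ∀ w ∈ LinearMap.range X, U w ∈ LinearMap.range X := by
    rintro _ ⟨v, rfl⟩
    exact ⟨-(U v), by rw [map_neg]; exact (eq_neg_of_add_eq_zero_left (h v)).symm⟩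
  have hnt : Nontrivial (LinearMap.range X) := by
    rw [Submodule.nontrivial_iff_ne_bot]
    intro hb
    exact hX (LinearMap.range_eq_bot.1 hb)
  obtain ⟨μ, hμ⟩ := Module.End.exists_eigenvalue (K := K) (U.restrict hW)
  obtain ⟨w, hw⟩ := hμ.exists_hasEigenvector
  have hw1 : U w.1 = μ • w.1 := by
    have := congrArg Subtype.val hw.apply_eq_smul
    exact this
  have hw0 : w.1 ≠ 0 := fun h0 => hw.2 (Subtype.ext h0)
  refine ⟨μ, ⟨w.1, hw0, hw1⟩, ?_⟩
  by_contra! hno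
  obtain ⟨v, hv⟩ := w.2
  let Z : V →ₗ[K] V := U + μ • LinearMap.id
  have hZ : ∀ x, Z x = U x + μ • x := fun x => rfl
  have hN : ∀ x ∈ LinearMap.ker X, Z x ∈ LinearMap.ker X := by
    intro x hx
    rw [LinearMap.mem_ker] at hx ⊢
    have := h x
    rw [hx, map_zero, zero_add] at this
    rw [hZ, map_add, map_smul, hx, this, smul_zero, add_zero]
  have hZinj : ∀ x, Z x = 0 → x = 0 := by
    intro x hx
    by_contra hx0
    apply hno x hx0
    rw [hZ] at hx
    rw [neg_smul]
    exact eq_neg_of_add_eq_zero_left hx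
  have hinj : Function.Injective (Z.restrict hN) := by
    rw [injective_iff_map_eq_zero]
    intro x hx
    exact Subtype.ext (hZinj x.1 (congrArg Subtype.val hx))
  have hsurj := LinearMap.injective_iff_surjective.1 hinj
  have hZv : Z v ∈ LinearMap.ker X := by
    rw [LinearMap.mem_ker, hZ, map_add, map_smul, hv, ← hw1, ← hv, add_comm]
    exact h v
  obtain ⟨y, hy⟩ := hsurj ⟨Z v, hZv⟩
  have hy' : Z y.1 = Z v := congrArg Subtype.val hy
  have h0 := hZinj (y.1 - v) (by rw [map_sub, hy', sub_self])
  have hyv : y.1 = v := sub_eq_zero.1 h0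
  apply hw0
  rw [← hv, ← hyv]
  exact y.2

theorem isRoot_of_eig {K : Type} [Field K] {n : ℕ} (U : Matrix (Fin n) (Fin n) K) (μ : K)
    (h : ∃ v, v ≠ 0 ∧ Matrix.toLin' U v = μ • v) : U.charpoly.IsRoot μ := by
  obtain ⟨v, hv0, hv⟩ := h
  have h1 : Module.End.HasEigenvalue (Matrix.toLin' U) μ :=
    Module.End.hasEigenvalue_of_hasEigenvector (x := v)
      ⟨Module.End.mem_eigenspace_iff.2 hv, hv0⟩
  have := (Module.End.hasEigenvalue_iff_isRoot_charpoly _ _).1 h1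
  rwa [← Matrix.charpoly_toLin' U]

theorem trace_zero_exceptional {F : Type} [Field F] [Fintype F] {K : Type} [Field K] [Algebra F K]
    [IsAlgClosed K] (h2 : (2 : K) ≠ 0) (U : Matrix (Fin 4) (Fin 4) F) (a : K)
    (ha : a ^ Fintype.card F ≠ a) (hd : dk (U.map (algebraMap F K)) a = 2)
    (hd' : dk (U.map (algebraMap F K)) (a ^ Fintype.card F) = 2)
    (hrho : rho F U ≠ 0) : U.trace = 0 := by
  classical
  set UK := U.map (algebraMap F K) with hUK
  let φ : K →+* K := (FiniteField.frobeniusAlgHom F K).toRingHom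
  have hφ : ∀ x, φ x = x ^ Fintype.card F := fun x => by
    change (FiniteField.frobeniusAlgHom F K) x = _
    rw [FiniteField.coe_frobeniusAlgHom]
  have hac : acE (Matrix.toLin' UK) ≠ ⊥ := by
    intro hb
    have := rho_le_closure K U
    rw [← hUK, hb, finrank_bot] at this
    omega
  obtain ⟨X, hX, hX0⟩ := Submodule.exists_mem_ne_zero_of_ne_bot hac
  obtain ⟨μ, e1, e2⟩ := eig_neg _ X hX0 hX
  have r1 := isRoot_of_eig UK _ e1
  have r2 := isRoot_of_eig UK _ e2
  have hmapφ : UK.charpoly.map φ = UK.charpoly := by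
    rw [← Matrix.charpoly_map]
    congr 1
    ext i j
    simp only [hUK, Matrix.map_apply, hφ]
    rw [← map_pow, FiniteField.pow_card]
  have hrφ : ∀ x, UK.charpoly.IsRoot x → UK.charpoly.IsRoot (φ x) := by
    intro x hx
    have := hx.map (f := φ)
    rwa [hmapφ] at this
  have r3 := hrφ _ r1
  have r4 := hrφ _ r2
  -- the square of `μ` is not fixed by Frobenius
  have hμ2 : μ ^ 2 = a ∨ μ ^ 2 = φ a := by
    by_contra! hno
    obtain ⟨v, hv0, hv⟩ := e1
    apply hv0
    have hvv : (UK * UK).mulVec v = μ ^ 2 • v := by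
      rw [← Matrix.mulVec_mulVec]
      rw [Matrix.toLin'_apply] at hv
      rw [hv, Matrix.mulVec_smul, hv, smul_smul, pow_two]
    have htop := Submodule.eq_top_of_disjoint _ _ (by
      have e1 := hd
      have e2 := hd'
      unfold dk at e1 e2
      rw [e1, e2]; simp) (dk_disjoint UK ha.symm)
    have hvt : v ∈ (⊤ : Submodule K (Fin 4 → K)) := trivial
    rw [← htop] at hvt
    obtain ⟨y, hy, z, hz, rfl⟩ := Submodule.mem_sup.1 hvt
    have hy' := mem_dk.1 hy
    have hz' := mem_dk.1 hz
    rw [Matrix.mulVec_add, hy', hz', ← hφ] at hvv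
    have h3 : (a - μ ^ 2) • y = (μ ^ 2 - φ a) • z := by
      have : a • y + φ a • z - (μ ^ 2 • (y + z)) = 0 := sub_eq_zero.2 hvv
      rw [← sub_eq_zero, ← this]
      module
    have hdis := Submodule.disjoint_def.1 (dk_disjoint UK ha.symm)
    have hy0 : y = 0 := by
      have := hdis _ (Submodule.smul_mem _ (a - μ ^ 2) hy)
        (by rw [h3]; exact Submodule.smul_mem _ _ hz)
      exact (smul_eq_zero.1 this).resolve_left (sub_ne_zero.2 hno.1.symm)
    rw [hy0, smul_zero] at h3
    have hz0 : z = 0 := (smul_eq_zero.1 h3.symm).resolve_left (sub_ne_zero.2 hno.2)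
    rw [hy0, hz0, add_zero]
  have hb : φ (μ ^ 2) ≠ μ ^ 2 := by
    rcases hμ2 with h | h
    · rw [h, hφ]; exact ha
    · rw [h]
      intro h'
      have := φ.injective h'
      rw [hφ] at this
      exact ha this
  have hμ0 : μ ≠ 0 := by
    rintro rfl
    apply hb; simp
  have n0 : ∀ x : K, x ≠ 0 → x ≠ -x := by
    intro x hx h
    have : 2 * x = 0 := by linear_combination h
    rcases mul_eq_zero.1 this with h | h
    · exact h2 h
    · exact hx h
  have hφμ0 : φ μ ≠ 0 := by rwa [map_ne_zero]
  have n1 : φ μ ≠ μ := fun h => hb (by rw [map_pow, h])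
  have n2 : φ μ ≠ -μ := fun h => hb (by rw [map_pow, h]; ring)
  have hroots : UK.charpoly.roots = {μ, -μ, φ μ, -(φ μ)} := by
    symm
    apply Multiset.eq_of_le_of_card_le
    · rw [Multiset.le_iff_subset]
      · intro x hx
        rw [Polynomial.mem_roots (Matrix.charpoly_monic UK).ne_zero]
        simp only [Multiset.insert_eq_cons, Multiset.mem_cons, Multiset.mem_singleton] at hx
        rw [map_neg] at r4
        rcases hx with rfl | rfl | rfl | rfl <;> assumption
      · simp only [Multiset.insert_eq_cons, Multiset.nodup_cons, Multiset.mem_cons,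
          Multiset.mem_singleton, Multiset.nodup_singleton, not_or]
        refine ⟨⟨n0 _ hμ0, n1.symm, fun h => n2 (by linear_combination h)⟩,
          ⟨n2.symm, fun h => n1 (neg_injective h).symm⟩, n0 _ hφμ0, trivial⟩
    · have := Polynomial.card_roots' UK.charpoly
      rw [Matrix.charpoly_natDegree_eq_dim] at this
      simpa using this
  have htr := Matrix.trace_eq_sum_roots_charpoly UK
  rw [hroots] at htr
  have h0 : UK.trace = 0 := by
    rw [htr]
    simp
  have : UK.trace = algebraMap F K U.trace := by
    rw [hUK]; simp [Matrix.trace]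
  rw [this] at h0
  exact (map_eq_zero _).1 h0

/-- Exponent for invertible matrices. -/
def tt (n : ℕ) : ℕ := if n ≤ 2 then 3 * n ^ 2 else 3 * n ^ 2 + 2 - 2 * n

theorem trichotomy {F : Type} [Field F] [Fintype F] (h2F : (2 : F) ≠ 0) {n : ℕ}
    (U : Matrix (Fin n) (Fin n) F) (hU : U.rank = n) :
    (∃ a : F, ∃ g ≤ n, dk U a = g ∧ (2 * n ^ 2 - g ^ 2) + 2 + 3 * rho F U ≤ tt n) ∨
    (2 * n ^ 2 + 3 * rho F U ≤ tt n) ∨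
    (n = 4 ∧ rho F U ≤ 4 ∧ U.trace = 0) := by
  classical
  let K := AlgebraicClosure F
  set UK := U.map (algebraMap F K) with hUK
  have h2 : (2 : K) ≠ 0 := by
    have : (2 : K) = algebraMap F K 2 := (map_ofNat (algebraMap F K) 2).symm
    rw [this, map_ne_zero]; exact h2F
  have hinj : Function.Injective (Matrix.toLin' UK) := by
    rw [← LinearMap.ker_eq_bot]
    apply Submodule.finrank_eq_zero.1
    rw [hUK, finrank_ker_map, finrank_ker_eq, hU, Nat.sub_self]
  rcases Nat.eq_zero_or_pos n with rfl | hpos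
  · right; left
    have : rho F U ≤ 0 := by
      have := Submodule.finrank_le (radical F U)
      refine this.trans ?_
      rw [Module.finrank_matrix]; simp
    simp [tt]; omega
  have hdn : ∀ a, dk UK a ≤ n := by
    intro a
    have := Submodule.finrank_le
      (LinearMap.ker (Matrix.toLin' (UK * UK - a • (1 : Matrix (Fin n) (Fin n) K))))
    simpa [dk] using this
  obtain ⟨a, hamax⟩ : ∃ a, ∀ b, dk UK b ≤ dk UK a := by
    have hfin : (Set.range (dk UK)).Finite :=
      (Set.finite_le_nat n).subset (by rintro _ ⟨a, rfl⟩; exact hdn a)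
    obtain ⟨_, ⟨a, rfl⟩, hm⟩ := Set.exists_max_image _ id hfin ⟨_, 0, rfl⟩
    exact ⟨a, fun b => hm _ ⟨b, rfl⟩⟩
  set M := dk UK a with hM
  have hM1 : 1 ≤ M := by
    have : Nonempty (Fin n) := ⟨⟨0, hpos⟩⟩
    obtain ⟨c, hc⟩ := Module.End.exists_eigenvalue (K := K) (V := Fin n → K) (Matrix.toLin' (UK * UK))
    obtain ⟨v, hv⟩ := hc.exists_hasEigenvector
    refine le_trans ?_ (hamax c)
    unfold dk
    rw [Nat.one_le_iff_ne_zero, ← Nat.pos_iff_ne_zero, Module.finrank_pos_iff]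
    have hmem : v ∈ LinearMap.ker (Matrix.toLin' (UK * UK - c • (1 : Matrix (Fin n) (Fin n) K))) :=
      mem_dk.2 hv.apply_eq_smul
    exact ⟨⟨v, hmem⟩, 0, fun h => hv.2 (congrArg Subtype.val h)⟩
  have hMn : M ≤ n := hdn a
  have hrho : rho F U ≤ 2 * (n * (M * M / 4) / M) :=
    (rho_le_closure K U).trans (peel_bound h2 UK hinj M hM1 hamax)
  have hrho2 : 2 * rho F U ≤ n * M := by
    have e1 : n * (M * M / 4) / M * M ≤ n * (M * M / 4) := Nat.div_mul_le_self _ _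
    have e2 : M * M / 4 * 4 ≤ M * M := Nat.div_mul_le_self _ _
    have e3 : 2 * rho F U * M ≤ n * M * M := by
      calc 2 * rho F U * M ≤ 2 * (2 * (n * (M * M / 4) / M)) * M := by gcongr
        _ = 4 * (n * (M * M / 4) / M * M) := by ring
        _ ≤ 4 * (n * (M * M / 4)) := by gcongr
        _ = n * (M * M / 4 * 4) := by ring
        _ ≤ n * (M * M) := by gcongr
        _ = _ := by ring
    exact Nat.le_of_mul_le_mul_right e3 hM1
  clear_value M
  by_cases haF : a ^ Fintype.card F = a
  · left
    obtain ⟨a', rfl⟩ := pow_card_fixed a haF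
    refine ⟨a', M, hMn, ?_, ?_⟩
    · rw [hM, hUK, dk_map]
    · have hsq : M ^ 2 ≤ n ^ 2 := Nat.pow_le_pow_left hMn 2
      rcases Nat.lt_or_ge n 5 with h5 | h5
      · have : n ∈ Finset.Icc 1 4 := by rw [Finset.mem_Icc]; omega
        clear hrho2
        interval_cases n <;> interval_cases M <;> simp [tt] at hrho ⊢ <;> omega
      · have e : tt n = 3 * n ^ 2 + 2 - 2 * n := by unfold tt; rw [if_neg (by omega)]
        rw [e]
        have key : 3 * rho F U + 2 * n ≤ n ^ 2 + M ^ 2 := by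
          have : 4 * (3 * rho F U + 2 * n) ≤ 4 * (n ^ 2 + M ^ 2) := by
            zify at *
            nlinarith [sq_nonneg (4 * (M : ℤ) - 3 * n)]
          omega
        have : 2 * n ≤ n ^ 2 := by nlinarith
        omega
  · have hsame : dk UK (a ^ Fintype.card F) = M := by
      let φ : K →+* K := (FiniteField.frobeniusAlgHom F K).toRingHom
      have hφ : ∀ x, φ x = x ^ Fintype.card F := fun x => by
        change (FiniteField.frobeniusAlgHom F K) x = _
        rw [FiniteField.coe_frobeniusAlgHom]
      have hmapφ : UK.map φ = UK := by
        ext i j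
        simp only [hUK, Matrix.map_apply, hφ]
        rw [← map_pow, FiniteField.pow_card]
      have := dk_map φ UK a
      rw [hmapφ, hφ] at this
      rw [this, hM]
    have hadd := dk_add_le UK haF
    rw [hsame, ← hM] at hadd
    right
    by_cases hex : n = 4 ∧ M = 2
    · obtain ⟨rfl, rfl⟩ := hex
      by_cases h0 : rho F U = 0
      · left; rw [h0]; simp [tt]
      · right
        exact ⟨rfl, by omega, trace_zero_exceptional h2 U a haF hM.symm hsame h0⟩
    · left
      rcases Nat.lt_or_ge n 7 with h7 | h7
      · clear hrho2
        have hM3 : M ≤ 3 := by omega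
        interval_cases n <;> interval_cases M <;> simp [tt] at hrho hex hadd ⊢ <;> omega
      · have e : tt n = 3 * n ^ 2 + 2 - 2 * n := by unfold tt; rw [if_neg (by omega)]
        rw [e]
        have key : 3 * rho F U + 2 * n ≤ n ^ 2 + 2 := by
          have h4 : 4 * rho F U ≤ n * n := by nlinarith
          nlinarith
        have : 2 * n ≤ n ^ 2 := by nlinarith
        omega

theorem eq_zero_of_rank_zero {F : Type} [Field F] {n : ℕ} (S : Matrix (Fin n) (Fin n) F)
    (h : S.rank = 0) : S = 0 := by
  have h1 : LinearMap.range S.mulVecLin = ⊥ := Submodule.finrank_eq_zero.1 h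
  have h2 : S.mulVecLin = 0 := LinearMap.range_eq_bot.1 h1
  ext i j
  have h3 := congrFun (LinearMap.congr_fun h2 (Pi.single j 1)) i
  simpa using h3

theorem card_trace_zero (F : Type) [Field F] [Fintype F] [DecidableEq F] :
    (Finset.univ.filter (fun U : Matrix (Fin 4) (Fin 4) F => U.trace = 0)).card ≤
      Fintype.card F ^ 15 := by
  classical
  have h : (Finset.univ.filter (fun U : Matrix (Fin 4) (Fin 4) F => U.trace = 0)).card ≤
      (Finset.univ : Finset ({p : Fin 4 × Fin 4 // p ≠ (0, 0)} → F)).card := by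
    apply Finset.card_le_card_of_injOn (fun U p => U p.1.1 p.1.2)
    · intro U _; simp
    · intro U hU U' hU' h
      have hU : U.trace = 0 := by simpa using hU
      have hU' : U'.trace = 0 := by simpa using hU'
      have hoff : ∀ i j, (i, j) ≠ ((0, 0) : Fin 4 × Fin 4) → U i j = U' i j :=
        fun i j hij => congrFun h ⟨(i, j), hij⟩
      ext i j
      by_cases hij : (i, j) = ((0, 0) : Fin 4 × Fin 4)
      · obtain ⟨rfl, rfl⟩ := Prod.mk.inj hij
        simp only [Matrix.trace, Matrix.diag_apply, Fin.sum_univ_four] at hU hU'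
        rw [hoff 1 1 (by decide), hoff 2 2 (by decide), hoff 3 3 (by decide)] at hU
        linear_combination hU - hU'
      · exact hoff i j hij
  refine h.trans (le_of_eq ?_)
  rw [Finset.card_univ, Fintype.card_fun]
  congr 1

theorem partA (F : Type) [Field F] [Fintype F] [DecidableEq F] (s : ℝ) (hs : 1 ≤ s)
    (hq : s ^ 2 = Fintype.card F) (n g : ℕ) (a : F) :
    ∑ U ∈ Finset.univ.filter (fun U : Matrix (Fin n) (Fin n) F =>
      dk U a = g ∧ (2 * n ^ 2 - g ^ 2) + 2 + 3 * rho F U ≤ tt n), s ^ (3 * rho F U) * s ^ 2 ≤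
      (Fintype.card (Fin g ↪ Fin n) : ℝ) * Csqrt g * s ^ tt n := by
  have hs0 : 0 ≤ s := by linarith
  have hC := Csqrt_nonneg g
  set A := Finset.univ.filter (fun U : Matrix (Fin n) (Fin n) F =>
      dk U a = g ∧ (2 * n ^ 2 - g ^ 2) + 2 + 3 * rho F U ≤ tt n) with hA
  rcases A.eq_empty_or_nonempty with h | ⟨U0, hU0⟩
  · rw [h, Finset.sum_empty]; positivity
  have hle : (2 * n ^ 2 - g ^ 2) ≤ tt n := by
    have := (Finset.mem_filter.1 hU0).2.2
    omega
  have h1 : ∀ U ∈ A, s ^ (3 * rho F U) * s ^ 2 ≤ s ^ (tt n - (2 * n ^ 2 - g ^ 2)) := by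
    intro U hU
    have := (Finset.mem_filter.1 hU).2.2
    rw [← pow_add]
    exact pow_le_pow_right₀ hs (by omega)
  refine (Finset.sum_le_card_nsmul _ _ _ h1).trans ?_
  rw [nsmul_eq_mul]
  have h2 : (A.card : ℝ) ≤
      (Fintype.card (Fin g ↪ Fin n) : ℝ) * Csqrt g * s ^ (2 * n ^ 2 - g ^ 2) := by
    refine le_trans ?_ (card_ker F s hs hq n g a)
    norm_cast
    apply Finset.card_le_card
    intro U hU
    rw [Finset.mem_filter] at hU ⊢
    exact ⟨hU.1, hU.2.1⟩
  calc _ ≤ _ * s ^ (tt n - (2 * n ^ 2 - g ^ 2)) := mul_le_mul_of_nonneg_right h2 (by positivity)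
    _ = _ := by rw [mul_assoc, ← pow_add]; congr 2; omega

theorem invertible_sum (n : ℕ) : ∃ C : ℝ, 0 ≤ C ∧ ∀ (F : Type) [Field F] [Fintype F] (s : ℝ),
    1 ≤ s → s ^ 2 = Fintype.card F → (2 : F) ≠ 0 →
    ∑ U ∈ Finset.univ.filter (fun U : Matrix (Fin n) (Fin n) F => U.rank = n),
      s ^ (3 * rho F U) ≤ C * s ^ tt n := by
  classical
  refine ⟨(∑ g ∈ Finset.range (n + 1), (Fintype.card (Fin g ↪ Fin n) : ℝ) * Csqrt g) + 2, ?_, ?_⟩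
  · have : 0 ≤ ∑ g ∈ Finset.range (n + 1), (Fintype.card (Fin g ↪ Fin n) : ℝ) * Csqrt g :=
      Finset.sum_nonneg (fun g _ => mul_nonneg (by positivity) (Csqrt_nonneg g))
    linarith
  intro F _ _ s hs hq h2
  have hs0 : 0 ≤ s := by linarith
  have hspos : 0 < s := by linarith
  let PA : F → ℕ → Matrix (Fin n) (Fin n) F → Prop := fun a g U =>
    dk U a = g ∧ (2 * n ^ 2 - g ^ 2) + 2 + 3 * rho F U ≤ tt n
  let PB : Matrix (Fin n) (Fin n) F → Prop := fun U => 2 * n ^ 2 + 3 * rho F U ≤ tt n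
  let PC : Matrix (Fin n) (Fin n) F → Prop := fun U => n = 4 ∧ rho F U ≤ 4 ∧ U.trace = 0
  let w : Matrix (Fin n) (Fin n) F → ℝ := fun U => s ^ (3 * rho F U)
  have hw : ∀ U, 0 ≤ w U := fun U => by positivity
  have hnn : ∀ (P : Prop) [Decidable P] U, 0 ≤ (if P then w U else 0) := by
    intro P _ U
    split_ifs
    · exact hw U
    · exact le_rfl
  have step1 : ∀ U ∈ Finset.univ.filter (fun U : Matrix (Fin n) (Fin n) F => U.rank = n),
      w U ≤ (∑ a : F, ∑ g ∈ Finset.range (n + 1), if PA a g U then w U else 0) +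
        (if PB U then w U else 0) + (if PC U then w U else 0) := by
    intro U hU
    have hs1 : 0 ≤ ∑ a : F, ∑ g ∈ Finset.range (n + 1), if PA a g U then w U else 0 :=
      Finset.sum_nonneg (fun a _ => Finset.sum_nonneg (fun g _ => hnn _ U))
    have hs2 := hnn (PB U) U
    have hs3 := hnn (PC U) U
    rcases trichotomy h2 U (Finset.mem_filter.1 hU).2 with ⟨a, g, hg, h⟩ | h | h
    · have e : w U ≤ ∑ a : F, ∑ g ∈ Finset.range (n + 1), if PA a g U then w U else 0 := by
        have e1 := Finset.single_le_sum
          (f := fun a : F => ∑ g ∈ Finset.range (n + 1), if PA a g U then w U else 0)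
          (fun a _ => Finset.sum_nonneg (fun g _ => hnn _ U)) (Finset.mem_univ a)
        have e2 := Finset.single_le_sum
          (f := fun g : ℕ => if PA a g U then w U else 0)
          (fun g _ => hnn _ U) (Finset.mem_range.2 (Nat.lt_succ_of_le hg))
        have e3 : (if PA a g U then w U else 0) = w U := if_pos h
        simp only [e3] at e2
        exact e2.trans e1
      linarith
    · have : (if PB U then w U else 0) = w U := if_pos h
      linarith
    · have : (if PC U then w U else 0) = w U := if_pos h
      linarith
  have step2 : ∑ U ∈ Finset.univ.filter (fun U : Matrix (Fin n) (Fin n) F => U.rank = n), w U ≤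
      ∑ U : Matrix (Fin n) (Fin n) F,
        ((∑ a : F, ∑ g ∈ Finset.range (n + 1), if PA a g U then w U else 0) +
        (if PB U then w U else 0) + (if PC U then w U else 0)) := by
    refine (Finset.sum_le_sum step1).trans ?_
    apply Finset.sum_le_sum_of_subset_of_nonneg (Finset.subset_univ _)
    intro U _ _
    have hs1 : 0 ≤ ∑ a : F, ∑ g ∈ Finset.range (n + 1), if PA a g U then w U else 0 :=
      Finset.sum_nonneg (fun a _ => Finset.sum_nonneg (fun g _ => hnn _ U))
    have hs2 := hnn (PB U) U
    have hs3 := hnn (PC U) U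
    linarith
  refine step2.trans ?_
  rw [Finset.sum_add_distrib, Finset.sum_add_distrib]
  have bA : ∑ U : Matrix (Fin n) (Fin n) F,
      ∑ a : F, ∑ g ∈ Finset.range (n + 1), (if PA a g U then w U else 0) ≤
      (∑ g ∈ Finset.range (n + 1), (Fintype.card (Fin g ↪ Fin n) : ℝ) * Csqrt g) * s ^ tt n := by
    rw [Finset.sum_comm]
    have hsw : ∀ a : F, ∑ U : Matrix (Fin n) (Fin n) F, ∑ g ∈ Finset.range (n + 1),
        (if PA a g U then w U else 0) ≤
        (∑ g ∈ Finset.range (n + 1), (Fintype.card (Fin g ↪ Fin n) : ℝ) * Csqrt g) * s ^ tt n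
          / s ^ 2 := by
      intro a
      rw [Finset.sum_comm, le_div_iff₀ (by positivity), Finset.sum_mul, Finset.sum_mul]
      apply Finset.sum_le_sum
      intro g _
      have := partA F s hs hq n g a
      rw [← Finset.sum_mul, Finset.sum_filter] at this
      exact this
    refine (Finset.sum_le_card_nsmul _ _ _ (fun a _ => hsw a)).trans ?_
    rw [nsmul_eq_mul, Finset.card_univ, ← hq]
    apply le_of_eq
    field_simp
  have bB : ∑ U : Matrix (Fin n) (Fin n) F, (if PB U then w U else 0) ≤ s ^ tt n := by
    by_cases hle : 2 * n ^ 2 ≤ tt n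
    · have h1 : ∀ U ∈ (Finset.univ : Finset (Matrix (Fin n) (Fin n) F)),
          (if PB U then w U else 0) ≤ s ^ (tt n - 2 * n ^ 2) := by
        intro U _
        split_ifs with h
        · exact pow_le_pow_right₀ hs (by have : 2 * n ^ 2 + 3 * rho F U ≤ tt n := h
                                         omega)
        · positivity
      refine (Finset.sum_le_card_nsmul _ _ _ h1).trans ?_
      have hcard : ((Finset.univ : Finset (Matrix (Fin n) (Fin n) F)).card : ℝ) =
          s ^ (2 * n ^ 2) := by
        have : (Finset.univ : Finset (Matrix (Fin n) (Fin n) F)).card =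
            Fintype.card F ^ (n * n) := by
          rw [Finset.card_univ]
          change Fintype.card (Fin n → Fin n → F) = _
          rw [Fintype.card_fun, Fintype.card_fun, Fintype.card_fin, ← pow_mul]
        rw [this]
        push_cast
        rw [← hq, ← pow_mul, pow_two]
      rw [nsmul_eq_mul, hcard, ← pow_add]
      exact pow_le_pow_right₀ hs (by omega)
    · refine le_trans (le_of_eq (Finset.sum_eq_zero ?_)) (by positivity : 0 ≤ s ^ tt n)
      intro U _
      apply if_neg
      intro h
      have : 2 * n ^ 2 + 3 * rho F U ≤ tt n := h
      omega
  have bC : ∑ U : Matrix (Fin n) (Fin n) F, (if PC U then w U else 0) ≤ s ^ tt n := by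
    by_cases h4 : n = 4
    · subst h4
      have h1 : ∀ U ∈ (Finset.univ : Finset (Matrix (Fin 4) (Fin 4) F)),
          (if PC U then w U else 0) ≤ (if U.trace = 0 then s ^ 12 else 0) := by
        intro U _
        by_cases h : PC U
        · rw [if_pos h, if_pos h.2.2]
          exact pow_le_pow_right₀ hs (by have := h.2.1; omega)
        · rw [if_neg h]
          split_ifs
          · positivity
          · exact le_rfl
      refine (Finset.sum_le_sum h1).trans ?_
      rw [← Finset.sum_filter, Finset.sum_const, nsmul_eq_mul]
      have hc : ((Finset.univ.filter (fun U : Matrix (Fin 4) (Fin 4) F => U.trace = 0)).card : ℝ) ≤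
          s ^ 30 := by
        rw [show 30 = 2 * 15 from rfl, pow_mul, hq]
        exact_mod_cast card_trace_zero F
      calc _ ≤ s ^ 30 * s ^ 12 := mul_le_mul_of_nonneg_right hc (by positivity)
        _ = _ := by rw [← pow_add]; rfl
    · refine le_trans (le_of_eq (Finset.sum_eq_zero ?_)) (by positivity : 0 ≤ s ^ tt n)
      intro U _
      apply if_neg
      intro h
      exact h4 h.1
  linarith

theorem sum_by_rank {F : Type} [Field F] [Fintype F] {n : ℕ} (w : Matrix (Fin n) (Fin n) F → ℝ) :
    ∑ U, w U = ∑ k ∈ Finset.range (n + 1),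
      ∑ U ∈ Finset.univ.filter (fun U : Matrix (Fin n) (Fin n) F => U.rank = k), w U := by
  classical
  symm
  apply Finset.sum_fiberwise_of_maps_to
  intro U _
  have := Matrix.rank_le_height U
  rw [Finset.mem_range]; omega

theorem tt_le (n : ℕ) : tt n ≤ 3 * n ^ 2 := by
  unfold tt
  split_ifs <;> omega

theorem total_sum (n : ℕ) : ∃ C : ℝ, 0 ≤ C ∧ ∀ (F : Type) [Field F] [Fintype F] (s : ℝ),
    1 ≤ s → s ^ 2 = Fintype.card F → (2 : F) ≠ 0 →
    ∑ U : Matrix (Fin n) (Fin n) F, s ^ (3 * rho F U) ≤ C * s ^ (3 * n ^ 2) := by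
  induction n using Nat.strong_induction_on with
  | _ n ih =>
  choose! C hC0 hC using ih
  obtain ⟨D, hD0, hD⟩ := invertible_sum n
  have hnn : ∀ k ∈ Finset.range n, 0 ≤ (Fintype.card (Fin k ↪ Fin n) : ℝ) * C k :=
    fun k hk => mul_nonneg (by positivity) (hC0 k (Finset.mem_range.1 hk))
  refine ⟨(∑ k ∈ Finset.range n, (Fintype.card (Fin k ↪ Fin n) : ℝ) * C k) + D,
    add_nonneg (Finset.sum_nonneg hnn) hD0, ?_⟩
  intro F _ _ s hs hq h2
  have hs0 : 0 ≤ s := by linarith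
  rw [sum_by_rank, Finset.sum_range_succ, add_mul, Finset.sum_mul]
  apply add_le_add
  · apply Finset.sum_le_sum
    intro k hk
    have hk' := Finset.mem_range.1 hk
    refine (sum_rank_le F s hs hq n k).trans ?_
    calc _ ≤ (Fintype.card (Fin k ↪ Fin n) : ℝ) * s ^ (4 * (k * (n - k)) + 3 * (n - k) ^ 2) *
          (C k * s ^ (3 * k ^ 2)) :=
          mul_le_mul_of_nonneg_left (hC k hk' F s hs hq h2) (by positivity)
      _ = (Fintype.card (Fin k ↪ Fin n) : ℝ) * C k *
          s ^ (4 * (k * (n - k)) + 3 * (n - k) ^ 2 + 3 * k ^ 2) := by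
          rw [pow_add _ _ (3 * k ^ 2)]; ring
      _ ≤ _ := by
          apply mul_le_mul_of_nonneg_left _ (hnn k hk)
          apply pow_le_pow_right₀ hs
          obtain ⟨j, rfl⟩ := Nat.exists_eq_add_of_le hk'.le
          rw [Nat.add_sub_cancel_left]
          nlinarith
  · refine (hD F s hs hq h2).trans ?_
    exact mul_le_mul_of_nonneg_left (pow_le_pow_right₀ hs (tt_le n)) hD0

theorem nonzero_sum (n : ℕ) (hn : 3 ≤ n) :
    ∃ C : ℝ, 0 ≤ C ∧ ∀ (F : Type) [Field F] [Fintype F] [DecidableEq F] (s : ℝ),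
    1 ≤ s → s ^ 2 = Fintype.card F → (2 : F) ≠ 0 →
    ∑ U ∈ Finset.univ.filter (fun U : Matrix (Fin n) (Fin n) F => U ≠ 0), s ^ (3 * rho F U) ≤
      C * s ^ (3 * n ^ 2 + 2 - 2 * n) := by
  classical
  choose C hC0 hC using total_sum
  obtain ⟨D, hD0, hD⟩ := invertible_sum n
  have hnn : ∀ k, 0 ≤ (Fintype.card (Fin k ↪ Fin n) : ℝ) * C k :=
    fun k => mul_nonneg (by positivity) (hC0 k)
  refine ⟨(∑ k ∈ Finset.range n, (Fintype.card (Fin k ↪ Fin n) : ℝ) * C k) + D,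
    add_nonneg (Finset.sum_nonneg (fun k _ => hnn k)) hD0, ?_⟩
  intro F _ _ _ s hs hq h2
  have hs0 : 0 ≤ s := by linarith
  rw [Finset.sum_filter, sum_by_rank, Finset.sum_range_succ, add_mul, Finset.sum_mul]
  have hle : ∀ U : Matrix (Fin n) (Fin n) F,
      (if U ≠ 0 then s ^ (3 * rho F U) else 0) ≤ s ^ (3 * rho F U) := by
    intro U
    split_ifs
    · exact le_rfl
    · positivity
  apply add_le_add
  · apply Finset.sum_le_sum
    intro k hk
    have hk' := Finset.mem_range.1 hk
    rcases Nat.eq_zero_or_pos k with rfl | hpos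
    · refine le_trans (le_of_eq (Finset.sum_eq_zero ?_)) (mul_nonneg (hnn 0) (by positivity))
      intro U hU
      have : U = 0 := eq_zero_of_rank_zero U (Finset.mem_filter.1 hU).2
      simp [this]
    refine (Finset.sum_le_sum (fun U _ => hle U)).trans ?_
    refine (sum_rank_le F s hs hq n k).trans ?_
    calc _ ≤ (Fintype.card (Fin k ↪ Fin n) : ℝ) * s ^ (4 * (k * (n - k)) + 3 * (n - k) ^ 2) *
          (C k * s ^ (3 * k ^ 2)) :=
          mul_le_mul_of_nonneg_left (hC k F s hs hq h2) (by positivity)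
      _ = (Fintype.card (Fin k ↪ Fin n) : ℝ) * C k *
          s ^ (4 * (k * (n - k)) + 3 * (n - k) ^ 2 + 3 * k ^ 2) := by
          rw [pow_add _ _ (3 * k ^ 2)]; ring
      _ ≤ _ := by
          apply mul_le_mul_of_nonneg_left _ (hnn k)
          apply pow_le_pow_right₀ hs
          obtain ⟨j, rfl⟩ := Nat.exists_eq_add_of_lt hk'
          rw [show k + j + 1 - k = j + 1 by omega]
          obtain ⟨i, rfl⟩ := Nat.exists_eq_add_of_lt hpos
          apply Nat.le_sub_of_add_le
          nlinarith [Nat.zero_le (i * j)]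
  · refine (Finset.sum_le_sum (fun U _ => hle U)).trans ((hD F s hs hq h2).trans ?_)
    have : tt n = 3 * n ^ 2 + 2 - 2 * n := by unfold tt; rw [if_neg (by omega)]
    rw [this]

theorem rho_le_sq {F : Type} [Field F] [Fintype F] {n : ℕ} (U : Matrix (Fin n) (Fin n) F) :
    rho F U ≤ n ^ 2 := by
  have := Submodule.finrank_le (radical F U)
  refine this.trans (le_of_eq ?_)
  rw [Module.finrank_matrix]; simp [pow_two]

theorem rho_bound {F : Type} [Field F] [Fintype F] (h2 : (2 : F) ≠ 0) {n : ℕ} (hn : 3 ≤ n)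
    (S : Matrix (Fin n) (Fin n) F) (hS : S ≠ 0) : rho F S + 2 * n ≤ n ^ 2 + 2 := by
  have hrk := Matrix.rank_le_height S
  have hr0 : S.rank ≠ 0 := fun h => hS (eq_zero_of_rank_zero S h)
  rcases Nat.lt_or_ge S.rank n with hlt | hge
  · obtain ⟨J, P, Q, hP, hPQ, hQ⟩ := exists_factor S rfl
    have := finrank_acE_comp_le (Matrix.toLin' P) (Matrix.toLin' Q) (injective_of_chart hP) hQ
    rw [← Matrix.toLin'_mul, ← Matrix.toLin'_mul, ← rho_eq_acE, ← rho_eq_acE, ← hPQ] at this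
    simp only [Module.finrank_fin_fun] at this
    have h3 := rho_le_sq (Q * P)
    generalize S.rank = k at *
    obtain ⟨j, hj⟩ := Nat.exists_eq_add_of_lt hlt
    obtain ⟨i, rfl⟩ := Nat.exists_eq_succ_of_ne_zero hr0
    rw [show n - i.succ = j + 1 by omega] at this
    have hn' : n = i + j + 2 := by omega
    have h4 : rho F S ≤ (j + 1) ^ 2 + (i + 1) ^ 2 := this.trans (Nat.add_le_add_left h3 _)
    have key : (j + 1) ^ 2 + (i + 1) ^ 2 + 2 * n ≤ n ^ 2 + 2 := by
      clear this h4 h3 hPQ hQ hP hS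
      rw [hn']
      nlinarith [Nat.zero_le (i * j)]
    linarith
  · have hr : S.rank = n := le_antisymm hrk hge
    have e : tt n = 3 * n ^ 2 + 2 - 2 * n := by unfold tt; rw [if_neg (by omega)]
    have e2 : 3 * n ≤ n ^ 2 := by nlinarith
    rcases trichotomy h2 S hr with ⟨a, g, hg, _, h⟩ | h | ⟨rfl, h, _⟩
    · have hg2 : g ^ 2 ≤ n ^ 2 := Nat.pow_le_pow_left hg 2
      rw [e] at h
      have h5 : 3 * rho F S + 2 * n ≤ 2 * n ^ 2 := by omega
      have h6 : 4 * n ≤ n ^ 2 + 6 := by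
        zify; nlinarith [sq_nonneg ((n : ℤ) - 2)]
      omega
    · rw [e] at h; omega
    · omega

/-- Lemma 5.6: for `n ≥ 3`, `r ≥ 3`,
`Σ_{S ≠ 0 in M_n(F_q)} q^{r(n²+ρ_S)/2} ≤ c q^{rn² - (n-1)(r-2)}` uniformly over odd `q`. -/
theorem rho_sum_general_rank (n r : ℕ) (hn : 3 ≤ n) (hr : 3 ≤ r) :
    ∃ c : ℝ, 0 < c ∧
      ∀ (F : Type) [Field F] [Fintype F] [DecidableEq F],
        Odd (Fintype.card F) →
        ∑ S ∈ Finset.univ.filter (fun S : Matrix (Fin n) (Fin n) F => S ≠ 0),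
            (Fintype.card F : ℝ) ^ ((r : ℝ) * ((n : ℝ) ^ 2 + (rho F S : ℝ)) / 2) ≤
          c * (Fintype.card F : ℝ) ^
            ((r : ℤ) * (n : ℤ) ^ 2 - ((n : ℤ) - 1) * ((r : ℤ) - 2)) := by
  obtain ⟨C, hC0, hC⟩ := nonzero_sum n hn
  refine ⟨C + 1, by linarith, ?_⟩
  intro F _ _ _ hodd
  have h2 : (2 : F) ≠ 0 := by
    apply Ring.two_ne_zero
    intro h
    have := FiniteField.even_card_of_char_two h
    rw [Nat.odd_iff] at hodd
    omega
  set q : ℝ := (Fintype.card F : ℝ) with hqdef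
  have hq1 : 1 ≤ q := by
    rw [hqdef]; exact_mod_cast Fintype.card_pos
  have hq0 : 0 ≤ q := by linarith
  have hsq : Real.sqrt q ^ 2 = q := Real.sq_sqrt hq0
  have hs1 : 1 ≤ Real.sqrt q := Real.one_le_sqrt.2 hq1
  have hmain := hC F (Real.sqrt q) hs1 hsq h2
  have hterm : ∀ a : ℕ, q ^ ((a : ℝ) / 2) = Real.sqrt q ^ a := by
    intro a
    rw [Real.sqrt_eq_rpow, ← Real.rpow_mul_natCast hq0]
    congr 1
    ring
  set s := Real.sqrt q with hsdef
  have hs0 : 0 ≤ s := by linarith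
  obtain ⟨m, rfl⟩ := Nat.exists_eq_add_of_le' hn
  obtain ⟨t, rfl⟩ := Nat.exists_eq_add_of_le' hr
  have hE : q ^ ((((t + 3 : ℕ) : ℤ)) * ((m + 3 : ℕ) : ℤ) ^ 2 -
      (((m + 3 : ℕ) : ℤ) - 1) * (((t + 3 : ℕ) : ℤ) - 2)) =
      s ^ (2 * (t * (m ^ 2 + 5 * m + 7) + (3 * m ^ 2 + 17 * m + 25))) := by
    rw [pow_mul, hsq, ← zpow_natCast]
    congr 1
    push_cast
    ring
  rw [hE]
  have e1 : 3 * (m + 3) ^ 2 + 2 - 2 * (m + 3) = 3 * m ^ 2 + 16 * m + 23 := by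
    apply Nat.sub_eq_of_eq_add
    ring
  rw [e1] at hmain
  calc _ ≤ ∑ S ∈ Finset.univ.filter (fun S : Matrix (Fin (m + 3)) (Fin (m + 3)) F => S ≠ 0),
        s ^ (3 * (m + 3) ^ 2 + t * (2 * (m ^ 2 + 5 * m + 7))) * s ^ (3 * rho F S) := by
        apply Finset.sum_le_sum
        intro S hS
        have hb := rho_bound h2 hn S (Finset.mem_filter.1 hS).2
        have e2 : ((t + 3 : ℕ) : ℝ) * (((m + 3 : ℕ) : ℝ) ^ 2 + (rho F S : ℝ)) / 2 =
            (((t + 3) * ((m + 3) ^ 2 + rho F S) : ℕ) : ℝ) / 2 := by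
          push_cast
          ring
        rw [e2, hterm, ← pow_add]
        apply pow_le_pow_right₀ hs1
        have hb2 : (m + 3) ^ 2 + rho F S ≤ 2 * (m ^ 2 + 5 * m + 7) := by nlinarith
        have hb3 := Nat.mul_le_mul_left t hb2
        rw [add_mul]
        linarith
    _ = s ^ (3 * (m + 3) ^ 2 + t * (2 * (m ^ 2 + 5 * m + 7))) *
        ∑ S ∈ Finset.univ.filter (fun S : Matrix (Fin (m + 3)) (Fin (m + 3)) F => S ≠ 0),
          s ^ (3 * rho F S) := by rw [Finset.mul_sum]
    _ ≤ s ^ (3 * (m + 3) ^ 2 + t * (2 * (m ^ 2 + 5 * m + 7))) *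
        (C * s ^ (3 * m ^ 2 + 16 * m + 23)) :=
        mul_le_mul_of_nonneg_left hmain (by positivity)
    _ = C * s ^ (2 * (t * (m ^ 2 + 5 * m + 7) + (3 * m ^ 2 + 17 * m + 25))) := by
        rw [mul_left_comm, ← pow_add]
        congr 2
        ring
    _ ≤ _ := mul_le_mul_of_nonneg_right (by linarith) (by positivity)
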